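/- arXiv:0908.2265 — 2 statements merged into one kernel-verified Lean document; each statement's English description precedes it below -/
import Mathlib

section
/- Properties of the blended vector field (Lemma 3.1): There exist positive constants ā and C, depending only on M, such that if |a| ≤ ā, then: (i) T_χ is timelike with respect to the Kerr metric at every point of the exterior region; (ii) for every smooth ψ on the exterior region the momentum density satisfies the uniform two-sided bound C⁻¹·X ≤ P^t_{T_χ}[ψ] ≤ C·X, where X = ((r²+a²)²/Δ)(T_⊥ψ)² + Δ(∂_rψ)² + Δ(∂_tψ)² + Σ_{i=1}^{3}|Θ_iψ|², with Σ_{i=1}^{3}|Θ_iψ|² = |∂_θψ|² + sin⁻²θ|∂_φψ|² + (cot²θ+1)... equal to the squared angular gradient plus |∂_φψ|², i.e. Σ_i|Θ_iψ|² = |∂_θψ|² + cot²θ|∂_φψ|² + |∂_φψ|²; and (iii) if □ψ = 0 then |(1/sinθ)·∂_α(sinθ·P^α_{T_χ}[ψ])| = Δ·|ω_H|·|∂_rχ|·|∂_φψ|·|∂_rψ| pointwise. -/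
/-!
The frame `T_⊥, ∂_r, ∂_θ, ∂_φ` diagonalizes the Kerr metric, and in it `T_χ = T_⊥ + d ∂_φ` with
`d = χ ω_H - 2aMr/Π`. Both the timelikeness of `T_χ` and the coercivity of its momentum density
reduce to one estimate, `(Π d)² ≤ r⁴ Δ / 4` (`key_estimate`), for `|a| ≤ M / 100`.

Near the horizon `χ = 1`, and `Π ω_H - 2aMr` is `a (r - r₊)` times a bounded function, because
`2aMr/Π = ω_H` at `r = r₊`; its square is then dominated by `Δ = (r - r₊)(r - r₋)`
(`near_estimate`). For `r ≥ 10M` one has `Δ ≥ r²/2`, and the smallness of `a` together with the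
support of `χ` is enough (`far_estimate`).

Given this, `g(T_χ, T_χ) = (sin²θ (Π d)² - Δ Σ²) / (Σ Π)` is negative since `Σ ≥ r²` (`timelike`).
The momentum density is half the sum of the diagonal terms
`(Π/Δ)(T_⊥ψ)²`, `Δ(∂_rψ)²`, `(∂_θψ)²`, `Σ²/(Π sin²θ) (∂_φψ)²` plus the cross term
`(Π d/Δ) T_⊥ψ ∂_φψ`, which the estimate absorbs (`momentum_zero_eq`, `momentum_bounds`).

For the divergence, the coefficients `G^{αβ}` do not depend on `t` and `φ`, and `T_χ` has
components only in these directions, so for a solution every term cancels except the one in which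
`∂_r` falls on `χ` (`divergence_eq`); this uses the symmetry of second derivatives (`pd_comm`).
-/

noncomputable section

open MeasureTheory Filter Topology

namespace KerrPaper

abbrev V4 : Type := Fin 4 → ℝ

/-- Partial derivative in the `i`-th coordinate (coordinates: 0 = t, 1 = r, 2 = θ, 3 = φ). -/
def pd (i : Fin 4) (ψ : V4 → ℝ) : V4 → ℝ :=
  fun x => deriv (fun s => ψ (Function.update x i s)) (x i)

def rplus (M a : ℝ) : ℝ := M + Real.sqrt (M ^ 2 - a ^ 2)

def Δk (M a r : ℝ) : ℝ := r ^ 2 - 2 * M * r + a ^ 2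

def SigK (a r θ : ℝ) : ℝ := r ^ 2 + a ^ 2 * Real.cos θ ^ 2

def PiK (M a r θ : ℝ) : ℝ := (r ^ 2 + a ^ 2) ^ 2 - a ^ 2 * Real.sin θ ^ 2 * Δk M a r

def ωH (M a : ℝ) : ℝ := a / (rplus M a ^ 2 + a ^ 2)

/-- The exterior region in Boyer–Lindquist coordinates `(t, r, θ, φ)`. -/
def ext (M a : ℝ) : Set V4 := {x | rplus M a < x 1 ∧ 0 < x 2 ∧ x 2 < Real.pi}

/-- The Carter operator. -/
def carterQ (a : ℝ) (ψ : V4 → ℝ) : V4 → ℝ :=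
  fun x =>
    (Real.sin (x 2))⁻¹ * pd 2 (fun y => Real.sin (y 2) * pd 2 ψ y) x +
      Real.cos (x 2) ^ 2 / Real.sin (x 2) ^ 2 * pd 3 (pd 3 ψ) x +
      a ^ 2 * Real.sin (x 2) ^ 2 * pd 0 (pd 0 ψ) x

/-- The operator ℛ(r; M, a; ∂_t, ∂_φ, Q). -/
def curlyR (M a : ℝ) (ψ : V4 → ℝ) : V4 → ℝ :=
  fun x =>
    -((x 1 ^ 2 + a ^ 2) ^ 2) * pd 0 (pd 0 ψ) x - 4 * a * M * x 1 * pd 0 (pd 3 ψ) x +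
      (Δk M a (x 1) - a ^ 2) * pd 3 (pd 3 ψ) x + Δk M a (x 1) * carterQ a ψ x

/-- The (rescaled) wave operator □ = Σ ∇^α∇_α. -/
def box (M a : ℝ) (ψ : V4 → ℝ) : V4 → ℝ :=
  fun x => pd 1 (fun y => Δk M a (y 1) * pd 1 ψ y) x + (Δk M a (x 1))⁻¹ * curlyR M a ψ x

/-- ψ is a smooth solution of the wave equation on the exterior region. -/
def IsWaveSol (M a : ℝ) (ψ : V4 → ℝ) : Prop :=
  ContDiffOn ℝ (⊤ : ℕ∞) ψ (ext M a) ∧ ∀ x ∈ ext M a, box M a ψ x = 0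

/-- G^{αβ} = Σ g^{αβ}, the rescaled inverse Kerr metric in BL coordinates. -/
def Ginv (M a r θ : ℝ) : Matrix (Fin 4) (Fin 4) ℝ :=
  !![-(PiK M a r θ) / Δk M a r, 0, 0, -(2 * a * M * r) / Δk M a r;
     0, Δk M a r, 0, 0;
     0, 0, 1, 0;
     -(2 * a * M * r) / Δk M a r, 0, 0,
       (Δk M a r - a ^ 2 * Real.sin θ ^ 2) / (Δk M a r * Real.sin θ ^ 2)]

/-- The momentum P_X^α[ψ]. -/
def momentum (M a : ℝ) (X : V4 → Fin 4 → ℝ) (ψ : V4 → ℝ) (α : Fin 4) : V4 → ℝ :=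
  fun x =>
    -(∑ γ, Ginv M a (x 1) (x 2) α γ * pd γ ψ x) * (∑ β, pd β ψ x * X x β) +
      (1 / 2) * X x α * ∑ ρ, ∑ σ, Ginv M a (x 1) (x 2) ρ σ * pd ρ ψ x * pd σ ψ x

/-- Parameter domain of a constant-t slice: (r, θ, φ). -/
def sliceSet (M a : ℝ) : Set (ℝ × ℝ × ℝ) :=
  Set.Ioi (rplus M a) ×ˢ Set.Ioo 0 Real.pi ×ˢ Set.Ioo 0 (2 * Real.pi)

def pt (t : ℝ) (p : ℝ × ℝ × ℝ) : V4 := ![t, p.1, p.2.1, p.2.2]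

/-- The energy E_X[ψ](t) = ∫ P_X^t[ψ] sinθ dr dθ dφ. -/
def energy (M a : ℝ) (X : V4 → Fin 4 → ℝ) (ψ : V4 → ℝ) (t : ℝ) : ℝ :=
  ∫ p in sliceSet M a, momentum M a X ψ 0 (pt t p) * Real.sin p.2.1

/-- χ is a smooth nonincreasing cutoff, ≡ 1 for r ≤ 10M and ≡ 0 for r ≥ 11M. -/
def IsCutoff (M : ℝ) (χ : ℝ → ℝ) : Prop :=
  ContDiff ℝ (⊤ : ℕ∞) χ ∧ Antitone χ ∧ (∀ r ≤ 10 * M, χ r = 1) ∧ ∀ r, 11 * M ≤ r → χ r = 0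

/-- The blended vector field T_χ = ∂_t + χ ω_H ∂_φ. -/
def Tchi (M a : ℝ) (χ : ℝ → ℝ) : V4 → Fin 4 → ℝ :=
  fun x => ![1, 0, 0, χ (x 1) * ωH M a]

/-- Triples (n_t, n_φ, n_Q) with n_t + n_φ + 2 n_Q ≤ n, indexing ∪_{i ≤ n} 𝕊_i. -/
def symTriples (n : ℕ) : Finset (ℕ × ℕ × ℕ) :=
  (Finset.range (n + 1) ×ˢ Finset.range (n + 1) ×ˢ Finset.range (n + 1)).filter
    fun m => m.1 + m.2.1 + 2 * m.2.2 ≤ n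

/-- The symmetry operator ∂_t^{n_t} ∂_φ^{n_φ} Q^{n_Q}. -/
def symOp (a : ℝ) (m : ℕ × ℕ × ℕ) (ψ : V4 → ℝ) : V4 → ℝ :=
  (pd 0)^[m.1] ((pd 3)^[m.2.1] ((carterQ a)^[m.2.2] ψ))

/-- The order-(n+1) energy E^{n+1}_X[ψ](t) = Σ_{i=0}^{n} Σ_{S ∈ 𝕊_i} E_X[Sψ](t). -/
def energyUpTo (M a : ℝ) (X : V4 → Fin 4 → ℝ) (n : ℕ) (ψ : V4 → ℝ) (t : ℝ) : ℝ :=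
  ∑ m ∈ symTriples n, energy M a X (symOp a m ψ) t

/-- The pointwise norm ‖ψ‖_n². -/
def ptNormSq (a : ℝ) (n : ℕ) (ψ : V4 → ℝ) : V4 → ℝ :=
  fun x => ∑ m ∈ symTriples n, (symOp a m ψ x) ^ 2

/-- The pointwise norm ‖∇̸ψ‖_n². -/
def angNormSq (a : ℝ) (n : ℕ) (ψ : V4 → ℝ) : V4 → ℝ :=
  fun x => ∑ m ∈ symTriples n,
    ((pd 2 (symOp a m ψ) x) ^ 2 + (Real.sin (x 2) ^ 2)⁻¹ * (pd 3 (symOp a m ψ) x) ^ 2)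

def energyIntegrable (M a : ℝ) (X : V4 → Fin 4 → ℝ) (ψ : V4 → ℝ) (t : ℝ) : Prop :=
  IntegrableOn (fun p => momentum M a X ψ 0 (pt t p) * Real.sin p.2.1) (sliceSet M a)

def energyFiniteUpTo (M a : ℝ) (X : V4 → Fin 4 → ℝ) (n : ℕ) (ψ : V4 → ℝ) : Prop :=
  ∀ t : ℝ, ∀ m ∈ symTriples n, energyIntegrable M a X (symOp a m ψ) t

/-! Transformed (tortoise-coordinate) quantities. -/

/-- Tortoise coordinate: dr/dr_* = Δ/(r²+a²), r_*(3M) = 0. -/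
def rstar (M a r : ℝ) : ℝ := ∫ s in (3 * M)..r, (s ^ 2 + a ^ 2) / Δk M a s

/-- Ñ² where Ñ⁻² = 1 − a² sin²θ Δ/(r²+a²)². -/
def Ntilde2 (M a r θ : ℝ) : ℝ :=
  (1 - a ^ 2 * Real.sin θ ^ 2 * Δk M a r / (r ^ 2 + a ^ 2) ^ 2)⁻¹

def VQ (M a r : ℝ) : ℝ := Δk M a r / (r ^ 2 + a ^ 2) ^ 2

/-- The potential V of the transformed wave equation. -/
def Vpot (M a r : ℝ) : ℝ :=
  Δk M a r * (2 * M * r ^ 3 + r ^ 2 * a ^ 2 - 4 * M * r * a ^ 2 + a ^ 4) / (r ^ 2 + a ^ 2) ^ 4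

/-- Partial derivatives in the (t, r_*, θ, φ) coordinates, acting on functions
parameterized by BL coordinates; ∂_{r_*} = (Δ/(r²+a²)) ∂_r. -/
def tpd (M a : ℝ) (i : Fin 4) (u : V4 → ℝ) : V4 → ℝ :=
  fun x => if i = 1 then Δk M a (x 1) / (x 1 ^ 2 + a ^ 2) * pd 1 u x else pd i u x

/-- G̃^{αβ} = (ΣΔ/(r²+a²)²) g^{αβ} in (t, r_*, θ, φ) coordinates. -/
def Gtilde (M a r θ : ℝ) : Matrix (Fin 4) (Fin 4) ℝ :=
  !![-(PiK M a r θ) / (r ^ 2 + a ^ 2) ^ 2, 0, 0, -(2 * a * M * r) / (r ^ 2 + a ^ 2) ^ 2;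
     0, 1, 0, 0;
     0, 0, VQ M a r, 0;
     -(2 * a * M * r) / (r ^ 2 + a ^ 2) ^ 2, 0, 0,
       (Δk M a r - a ^ 2 * Real.sin θ ^ 2) / ((r ^ 2 + a ^ 2) ^ 2 * Real.sin θ ^ 2)]

/-- The transformed momentum P̃^α_{(X,q)}[ũ]. -/
def tmomentum (M a : ℝ) (X : V4 → Fin 4 → ℝ) (q : V4 → ℝ) (u : V4 → ℝ) (α : Fin 4) :
    V4 → ℝ :=
  fun x =>
    -(∑ γ, Gtilde M a (x 1) (x 2) α γ * tpd M a γ u x) * (∑ β, tpd M a β u x * X x β) +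
      (1 / 2) * X x α *
        ((∑ ρ, ∑ σ, Gtilde M a (x 1) (x 2) ρ σ * tpd M a ρ u x * tpd M a σ u x) +
          Vpot M a (x 1) * u x ^ 2) +
      ∑ β, Gtilde M a (x 1) (x 2) α β *
        (-(q x) * tpd M a β u x * u x + (1 / 2) * tpd M a β q x * u x ^ 2)

/-- The transformed energy Ẽ_{(X,q)}[ũ](t) = ∫ P̃^t sinθ dr_* dθ dφ (as an r-integral). -/
def tenergy (M a : ℝ) (X : V4 → Fin 4 → ℝ) (q : V4 → ℝ) (u : V4 → ℝ) (t : ℝ) : ℝ :=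
  ∫ p in sliceSet M a,
    tmomentum M a X q u 0 (pt t p) * Real.sin p.2.1 * ((p.1 ^ 2 + a ^ 2) / Δk M a p.1)

def zeroFn : V4 → ℝ := fun _ => 0

def tenergyUpTo (M a : ℝ) (X : V4 → Fin 4 → ℝ) (q : V4 → ℝ) (n : ℕ) (u : V4 → ℝ)
    (t : ℝ) : ℝ :=
  ∑ m ∈ symTriples n, tenergy M a X q (symOp a m u) t

def tenergyIntegrable (M a : ℝ) (X : V4 → Fin 4 → ℝ) (q : V4 → ℝ) (u : V4 → ℝ)
    (t : ℝ) : Prop :=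
  IntegrableOn
    (fun p => tmomentum M a X q u 0 (pt t p) * Real.sin p.2.1 * ((p.1 ^ 2 + a ^ 2) / Δk M a p.1))
    (sliceSet M a)

def tenergyFiniteUpTo (M a : ℝ) (X : V4 → Fin 4 → ℝ) (q : V4 → ℝ) (n : ℕ)
    (u : V4 → ℝ) : Prop :=
  ∀ t : ℝ, ∀ m ∈ symTriples n, tenergyIntegrable M a X q (symOp a m u) t

/-- The vector field K = (t² + r_*² + 1) T_χ + 2 t r_* Ñ² ∂_{r_*}, in tilde coordinates. -/
def Kvec (M a : ℝ) (χ : ℝ → ℝ) : V4 → Fin 4 → ℝ :=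
  fun x =>
    ![x 0 ^ 2 + rstar M a (x 1) ^ 2 + 1,
      2 * x 0 * rstar M a (x 1) * Ntilde2 M a (x 1) (x 2),
      0,
      (x 0 ^ 2 + rstar M a (x 1) ^ 2 + 1) * (χ (x 1) * ωH M a)]

def qK (M a : ℝ) : V4 → ℝ := fun x => x 0 * (Ntilde2 M a (x 1) (x 2) - 1)

/-- T_⊥ = ∂_t + (2aMr/Π) ∂_φ. -/
def Tperp (M a : ℝ) : V4 → Fin 4 → ℝ :=
  fun x => ![1, 0, 0, 2 * a * M * x 1 / PiK M a (x 1) (x 2)]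

/-- The future unit normal n = (Π/(ΣΔ))^{1/2} T_⊥ of the constant-t slices. -/
def normalVF (M a : ℝ) : V4 → Fin 4 → ℝ :=
  fun x i =>
    Real.sqrt (PiK M a (x 1) (x 2) / (SigK a (x 1) (x 2) * Δk M a (x 1))) * Tperp M a x i

/-- ũ = √(r² + a²) ψ. -/
def utilde (a : ℝ) (ψ : V4 → ℝ) : V4 → ℝ := fun x => Real.sqrt (x 1 ^ 2 + a ^ 2) * ψ x

/-- The transformed wave operator ∂_{r_*}² + (r²+a²)⁻² ℛ − V. -/
def tbox (M a : ℝ) (u : V4 → ℝ) : V4 → ℝ :=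
  fun x =>
    tpd M a 1 (tpd M a 1 u) x + ((x 1 ^ 2 + a ^ 2) ^ 2)⁻¹ * curlyR M a u x -
      Vpot M a (x 1) * u x

def IsTWaveSol (M a : ℝ) (u : V4 → ℝ) : Prop :=
  ContDiffOn ℝ (⊤ : ℕ∞) u (ext M a) ∧ ∀ x ∈ ext M a, tbox M a u x = 0

/-- The Kerr metric (lower indices) in BL coordinates. -/
def gBL (M a r θ : ℝ) : Matrix (Fin 4) (Fin 4) ℝ :=
  !![-(1 - 2 * M * r / SigK a r θ), 0, 0, -(2 * a * M * r * Real.sin θ ^ 2 / SigK a r θ);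
     0, SigK a r θ / Δk M a r, 0, 0;
     0, 0, SigK a r θ, 0;
     -(2 * a * M * r * Real.sin θ ^ 2 / SigK a r θ), 0, 0,
       PiK M a r θ * Real.sin θ ^ 2 / SigK a r θ]

/-- The Kerr metric (lower indices) in (t, r_*, θ, φ) coordinates. -/
def gTl (M a r θ : ℝ) : Matrix (Fin 4) (Fin 4) ℝ :=
  !![-(1 - 2 * M * r / SigK a r θ), 0, 0, -(2 * a * M * r * Real.sin θ ^ 2 / SigK a r θ);
     0, SigK a r θ * Δk M a r / (r ^ 2 + a ^ 2) ^ 2, 0, 0;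
     0, 0, SigK a r θ, 0;
     -(2 * a * M * r * Real.sin θ ^ 2 / SigK a r θ), 0, 0,
       PiK M a r θ * Real.sin θ ^ 2 / SigK a r θ]

def quadForm (g : Matrix (Fin 4) (Fin 4) ℝ) (X Y : Fin 4 → ℝ) : ℝ :=
  ∑ i, ∑ j, g i j * X i * Y j

/-! Null geodesics. -/

def gBLinv (M a r θ : ℝ) : Matrix (Fin 4) (Fin 4) ℝ := (SigK a r θ)⁻¹ • Ginv M a r θ

def vel (γ : ℝ → V4) (s : ℝ) (i : Fin 4) : ℝ := deriv (fun u => γ u i) s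

def christoffel (M a : ℝ) (x : V4) (k i j : Fin 4) : ℝ :=
  (1 / 2) * ∑ l, gBLinv M a (x 1) (x 2) k l *
    (pd i (fun y => gBL M a (y 1) (y 2) l j) x + pd j (fun y => gBL M a (y 1) (y 2) l i) x -
      pd l (fun y => gBL M a (y 1) (y 2) i j) x)

/-- r admits an orbiting null geodesic: there is a (nonconstant) null geodesic of the Kerr
metric remaining at that constant value of r in the exterior region. -/
def IsOrbitingNullGeodesicRadius (M a r : ℝ) : Prop :=
  ∃ γ : ℝ → V4,
    (∀ i, ContDiff ℝ (⊤ : ℕ∞) fun s => γ s i) ∧ (∀ s, γ s ∈ ext M a) ∧ (∀ s, γ s 1 = r) ∧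
      (∃ s i, vel γ s i ≠ 0) ∧
      (∀ s, quadForm (gBL M a (γ s 1) (γ s 2)) (vel γ s) (vel γ s) = 0) ∧
      ∀ s k, deriv (fun u => vel γ u k) s +
        ∑ i, ∑ j, christoffel M a (γ s) k i j * vel γ s i * vel γ s j = 0

/-! Morawetz (symmetry-indexed) quantities. -/

/-- Coefficients ℛ^a of ℛ in the basis 𝕊₂ = {∂_t², ∂_t∂_φ, ∂_φ², Q}. -/
def Rcoef (M a r : ℝ) : Fin 4 → ℝ :=
  ![-((r ^ 2 + a ^ 2) ^ 2), -(4 * a * M * r), Δk M a r - a ^ 2, Δk M a r]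

/-- Coefficients ℒ^a of ℒ = ∂_t² + ∂_φ² + Q in the basis 𝕊₂. -/
def Lcoef : Fin 4 → ℝ := ![1, 0, 1, 1]

/-- The second-order symmetry operators S_a ∈ 𝕊₂. -/
def symS (a : ℝ) (c : Fin 4) (ψ : V4 → ℝ) : V4 → ℝ :=
  if c = 0 then pd 0 (pd 0 ψ)
  else if c = 1 then pd 0 (pd 3 ψ)
  else if c = 2 then pd 3 (pd 3 ψ)
  else carterQ a ψ

/-- The coefficient matrices S_a^{αβ} with S_a = μ⁻¹ ∂_α (μ S_a^{αβ} ∂_β). -/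
def Smat (a : ℝ) (c : Fin 4) (θ : ℝ) : Matrix (Fin 4) (Fin 4) ℝ :=
  if c = 0 then !![1, 0, 0, 0; 0, 0, 0, 0; 0, 0, 0, 0; 0, 0, 0, 0]
  else if c = 1 then !![0, 0, 0, 1 / 2; 0, 0, 0, 0; 0, 0, 0, 0; 1 / 2, 0, 0, 0]
  else if c = 2 then !![0, 0, 0, 0; 0, 0, 0, 0; 0, 0, 0, 0; 0, 0, 0, 1]
  else
    !![a ^ 2 * Real.sin θ ^ 2, 0, 0, 0; 0, 0, 0, 0; 0, 0, 1, 0;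
       0, 0, 0, Real.cos θ ^ 2 / Real.sin θ ^ 2]

/-- ℒ^{αβ} = Σ_c ℒ^c S_c^{αβ}. -/
def Lmat (a : ℝ) (θ : ℝ) : Matrix (Fin 4) (Fin 4) ℝ :=
  fun α β => ∑ c, Lcoef c * Smat a c θ α β

/-- ℛ̃′^a = ∂_r (z₁ Δ⁻¹ ℛ^a). -/
def Rtp (M a : ℝ) (z₁ : ℝ → ℝ) (c : Fin 4) (r : ℝ) : ℝ :=
  deriv (fun s => z₁ s * (Δk M a s)⁻¹ * Rcoef M a s c) r

/-- ℛ̃̃″^a = ∂_r (z₂ z₁^{1/2} Δ^{−1/2} ℛ̃′^a). -/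
def Rtpp (M a : ℝ) (z₁ z₂ : ℝ → ℝ) (c : Fin 4) (r : ℝ) : ℝ :=
  deriv (fun s => z₂ s * Real.sqrt (z₁ s) * (Real.sqrt (Δk M a s))⁻¹ * Rtp M a z₁ c s) r

/-- 𝒜^a = z₁^{1/2} Δ^{3/2} (−ℛ̃̃″^a). -/
def Acoef (M a : ℝ) (z₁ z₂ : ℝ → ℝ) (c : Fin 4) (r : ℝ) : ℝ :=
  Real.sqrt (z₁ r) * (Δk M a r * Real.sqrt (Δk M a r)) * (-(Rtpp M a z₁ z₂ c r))

/-- 𝒰^{cd} = (1/2) z₂ ℛ̃′^c ℛ̃′^d. -/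
def Ucoef (M a : ℝ) (z₁ z₂ : ℝ → ℝ) (c d : Fin 4) (r : ℝ) : ℝ :=
  (1 / 2) * z₂ r * Rtp M a z₁ c r * Rtp M a z₁ d r

/-- 𝒱^a = (1/4) ∂_r (Δ ∂_r (z₁ ∂_r (z₂ ℛ̃′^a))). -/
def Vcoef (M a : ℝ) (z₁ z₂ : ℝ → ℝ) (c : Fin 4) (r : ℝ) : ℝ :=
  (1 / 4) *
    deriv (fun s =>
      Δk M a s * deriv (fun w => z₁ w * deriv (fun v => z₂ v * Rtp M a z₁ c v) w) s) r

/-- The r-component of the Morawetz vector field A^{ab} = z₁ z₂ ℛ̃′^{(a} ℒ^{b)} ∂_r. -/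
def AvecR (M a : ℝ) (z₁ z₂ : ℝ → ℝ) (i j : Fin 4) (r : ℝ) : ℝ :=
  z₁ r * z₂ r * ((1 / 2) * (Rtp M a z₁ i r * Lcoef j + Rtp M a z₁ j r * Lcoef i))

/-- The Morawetz scalars q_A^{ab}. -/
def qA (M a : ℝ) (z₁ z₂ : ℝ → ℝ) (i j : Fin 4) (r : ℝ) : ℝ :=
  (1 / 2) * deriv (AvecR M a z₁ z₂ i j) r -
    (1 / 2) * deriv z₁ r * z₂ r *
      ((1 / 2) * (Rtp M a z₁ i r * Lcoef j + Rtp M a z₁ j r * Lcoef i))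

/-- The symmetry-indexed Morawetz momentum P_A^α[ψ]. -/
def morMomentum (M a : ℝ) (z₁ z₂ : ℝ → ℝ) (ψ : V4 → ℝ) (α : Fin 4) : V4 → ℝ :=
  fun x => ∑ i, ∑ j,
    (-(∑ γ, Ginv M a (x 1) (x 2) α γ * pd γ (symS a i ψ) x) * pd 1 (symS a j ψ) x *
        AvecR M a z₁ z₂ i j (x 1) +
      (1 / 2) * (if α = 1 then AvecR M a z₁ z₂ i j (x 1) else 0) *
        (∑ ρ, ∑ σ, Ginv M a (x 1) (x 2) ρ σ * pd ρ (symS a i ψ) x * pd σ (symS a j ψ) x) +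
      ∑ β, Ginv M a (x 1) (x 2) α β *
        (-(qA M a z₁ z₂ i j (x 1)) * pd β (symS a i ψ) x * symS a j ψ x +
          (1 / 2) * pd β (fun y => qA M a z₁ z₂ i j (y 1)) x * symS a i ψ x * symS a j ψ x))

/-- The first boundary current P∂₁^α[ψ]. -/
def morBoundary1 (M a : ℝ) (z₁ z₂ : ℝ → ℝ) (ψ : V4 → ℝ) (α : Fin 4) : V4 → ℝ :=
  fun x => ∑ i, ∑ j, ∑ β,
    (Ucoef M a z₁ z₂ i j (x 1) * Lmat a (x 2) α β -
        ∑ c, (1 / 2) *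
          (Ucoef M a z₁ z₂ c i (x 1) * Lcoef j + Ucoef M a z₁ z₂ c j (x 1) * Lcoef i) *
          Smat a c (x 2) α β) *
      symS a i ψ x * pd β (symS a j ψ) x

/-! Surface energies. -/

def pdR (f : ℝ × ℝ × ℝ → ℝ) (p : ℝ × ℝ × ℝ) : ℝ := deriv (fun s => f (s, p.2)) p.1

def pdTh (f : ℝ × ℝ × ℝ → ℝ) (p : ℝ × ℝ × ℝ) : ℝ :=
  deriv (fun s => f (p.1, s, p.2.2)) p.2.1

def pdPh (f : ℝ × ℝ × ℝ → ℝ) (p : ℝ × ℝ × ℝ) : ℝ :=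
  deriv (fun s => f (p.1, p.2.1, s)) p.2.2

/-- Flux of the transformed momentum through the graph t = f(r_*, θ, φ)
(f given as a function of (r, θ, φ), with ∂_{r_*} f = (Δ/(r²+a²)) ∂_r f). -/
def tsurfEnergy (M a : ℝ) (X : V4 → Fin 4 → ℝ) (q : V4 → ℝ) (u : V4 → ℝ)
    (f : ℝ × ℝ × ℝ → ℝ) : ℝ :=
  ∫ p in sliceSet M a,
    (tmomentum M a X q u 0 (pt (f p) p) -
        Δk M a p.1 / (p.1 ^ 2 + a ^ 2) * pdR f p * tmomentum M a X q u 1 (pt (f p) p) -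
        pdTh f p * tmomentum M a X q u 2 (pt (f p) p) -
        pdPh f p * tmomentum M a X q u 3 (pt (f p) p)) *
      Real.sin p.2.1 * ((p.1 ^ 2 + a ^ 2) / Δk M a p.1)

def tsurfEnergyIntegrable (M a : ℝ) (X : V4 → Fin 4 → ℝ) (q : V4 → ℝ) (u : V4 → ℝ)
    (f : ℝ × ℝ × ℝ → ℝ) : Prop :=
  IntegrableOn
    (fun p =>
      (tmomentum M a X q u 0 (pt (f p) p) -
          Δk M a p.1 / (p.1 ^ 2 + a ^ 2) * pdR f p * tmomentum M a X q u 1 (pt (f p) p) -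
          pdTh f p * tmomentum M a X q u 2 (pt (f p) p) -
          pdPh f p * tmomentum M a X q u 3 (pt (f p) p)) *
        Real.sin p.2.1 * ((p.1 ^ 2 + a ^ 2) / Δk M a p.1))
    (sliceSet M a)


/-! ### Geometry of the exterior region -/

lemma Δk_pos_and_lt {M a r : ℝ} (hM : 0 < M) (ha : |a| ≤ M) (hr : rplus M a < r) :
    0 < Δk M a r ∧ M < r := by
  have h0 : a ^ 2 ≤ M ^ 2 := sq_le_sq' (by linarith [abs_le.1 ha]) (abs_le.1 ha).2
  have hs := Real.sq_sqrt (sub_nonneg.2 h0)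
  have hs0 := Real.sqrt_nonneg (M ^ 2 - a ^ 2)
  unfold rplus at hr
  unfold Δk
  constructor <;> nlinarith

lemma PiK_eq (M a r θ : ℝ) :
    PiK M a r θ = (r ^ 2 + a ^ 2) * SigK a r θ + 2 * M * r * a ^ 2 * Real.sin θ ^ 2 := by
  unfold PiK SigK Δk
  rw [Real.cos_sq']
  ring

/-- The determinant of the `(t, φ)` block of the metric, up to the factor `-sin²θ/Σ²`; it
equals `-Δ sin²θ`. -/
lemma det_identity (M a r θ : ℝ) :
    (SigK a r θ - 2 * M * r) * PiK M a r θ + 4 * a ^ 2 * M ^ 2 * r ^ 2 * Real.sin θ ^ 2 =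
      Δk M a r * SigK a r θ ^ 2 := by
  unfold PiK SigK Δk
  rw [Real.cos_sq']
  ring

/-- The determinant of the `(t, φ)` block of `G^{αβ}`, up to the factor
`-1/(Δ² sin²θ)`; it gives `G^{φφ} = Σ²/(Π sin²θ) - (2aMr)²/(ΔΠ)`. -/
lemma det_inv_identity (M a r θ : ℝ) :
    (Δk M a r - a ^ 2 * Real.sin θ ^ 2) * PiK M a r θ +
        4 * a ^ 2 * M ^ 2 * r ^ 2 * Real.sin θ ^ 2 =
      Δk M a r * SigK a r θ ^ 2 := by
  unfold PiK SigK Δk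
  rw [Real.cos_sq']
  ring

lemma SigK_ge (a r θ : ℝ) : r ^ 2 ≤ SigK a r θ := by
  unfold SigK
  nlinarith [mul_nonneg (sq_nonneg a) (sq_nonneg (Real.cos θ))]

lemma SigK_le (a r θ : ℝ) : SigK a r θ ≤ r ^ 2 + a ^ 2 := by
  unfold SigK
  nlinarith [mul_le_of_le_one_right (sq_nonneg a) (Real.cos_sq_le_one θ)]

lemma PiK_le {M a r : ℝ} (θ : ℝ) (hD : 0 < Δk M a r) :
    PiK M a r θ ≤ (r ^ 2 + a ^ 2) ^ 2 := by
  have := mul_nonneg (mul_nonneg (sq_nonneg a) (sq_nonneg (Real.sin θ))) hD.le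
  unfold PiK
  linarith

lemma SigK_sq_le {M a r : ℝ} (θ : ℝ) (hM : 0 < M) (hr : M < r) :
    SigK a r θ ^ 2 ≤ PiK M a r θ := by
  have hr0 : 0 < r := hM.trans hr
  have hS0 : 0 ≤ SigK a r θ := (sq_nonneg r).trans (SigK_ge a r θ)
  have h1 := mul_le_mul_of_nonneg_right (SigK_le a r θ) hS0
  have h2 : 0 ≤ 2 * M * r * a ^ 2 * Real.sin θ ^ 2 := by positivity
  rw [PiK_eq]
  linarith

lemma PiK_ge {M a r : ℝ} (θ : ℝ) (hM : 0 < M) (hr : M < r) :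
    (r ^ 2 + a ^ 2) * r ^ 2 ≤ PiK M a r θ := by
  rw [PiK_eq]
  have h1 := mul_le_mul_of_nonneg_left (SigK_ge a r θ) (by positivity : 0 ≤ r ^ 2 + a ^ 2)
  have h2 : 0 ≤ 2 * M * r * a ^ 2 * Real.sin θ ^ 2 := by
    have : 0 < r := hM.trans hr
    positivity
  linarith

lemma IsCutoff.nonneg {M : ℝ} {χ : ℝ → ℝ} (h : IsCutoff M χ) (r : ℝ) : 0 ≤ χ r := by
  rw [← h.2.2.2 (max r (11 * M)) (le_max_right _ _)]
  exact h.2.1 (le_max_left _ _)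

lemma IsCutoff.le_one {M : ℝ} {χ : ℝ → ℝ} (h : IsCutoff M χ) (r : ℝ) : χ r ≤ 1 := by
  rw [← h.2.2.1 (min r (10 * M)) (min_le_right _ _)]
  exact h.2.1 (min_le_left _ _)

/-! ### The angular velocity of `T_χ` relative to `T_⊥` -/

/-- Where `χ = 1`, the difference `Π ω_H - 2aMr` vanishes to first order at the horizon. -/
lemma near_estimate {M a r : ℝ} (θ : ℝ) (hM : 0 < M) (ha : |a| ≤ M / 100)
    (hr : rplus M a < r) (hr10 : r ≤ 10 * M) :
    (PiK M a r θ * ωH M a - 2 * a * M * r) ^ 2 ≤ 1 / 4 * r ^ 4 * Δk M a r := by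
  obtain ⟨hD, hMr⟩ := Δk_pos_and_lt hM (ha.trans (by linarith)) hr
  have ha2 : a ^ 2 ≤ (M / 100) ^ 2 := sq_le_sq' (by linarith [abs_le.1 ha]) (abs_le.1 ha).2
  have hsq := Real.sq_sqrt (show 0 ≤ M ^ 2 - a ^ 2 by nlinarith)
  have hs0 := Real.sqrt_nonneg (M ^ 2 - a ^ 2)
  set R := rplus M a with hR
  have hRM : M ≤ R := by rw [hR]; unfold rplus; linarith
  -- the horizon equation
  have hRe : R ^ 2 + a ^ 2 = 2 * M * R := by
    rw [hR]; unfold rplus; linear_combination hsq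
  have hR0 : 0 < R := hM.trans_le hRM
  have hω : ωH M a = a / (2 * M * R) := by
    unfold ωH; rw [← hR, hRe]
  have hΔ : Δk M a r = (r - R) * (r - (2 * M - R)) := by
    unfold Δk; linear_combination hRe
  have hs1 := Real.sin_sq_le_one θ
  have hs2 := sq_nonneg (Real.sin θ)
  have has : a ^ 2 * Real.sin θ ^ 2 ≤ M ^ 2 := by
    nlinarith [mul_le_of_le_one_right (sq_nonneg a) hs1]
  have has0 : 0 ≤ a ^ 2 * Real.sin θ ^ 2 := by positivity
  have hr0 : 0 < r := hM.trans hMr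
  have hR2 : R ≤ 2 * M := by nlinarith [sq_nonneg a]
  set B := (r - (2 * M - R)) * (Δk M a r + 4 * M * r - a ^ 2 * Real.sin θ ^ 2) +
    4 * M ^ 2 * r with hB
  have hfac : PiK M a r θ * ωH M a - 2 * a * M * r = a * (r - R) * B / (2 * M * R) := by
    rw [hω]
    field_simp
    have hP : PiK M a r θ = Δk M a r * (Δk M a r + 4 * M * r - a ^ 2 * Real.sin θ ^ 2) +
        4 * M ^ 2 * r ^ 2 := by
      unfold PiK Δk; ring
    rw [hP, hB]
    linear_combination (a * (Δk M a r + 4 * M * r - a ^ 2 * Real.sin θ ^ 2)) * hΔ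
  have hDr : Δk M a r ≤ r ^ 2 := by
    unfold Δk; nlinarith
  have hE0 : 0 ≤ Δk M a r + 4 * M * r - a ^ 2 * Real.sin θ ^ 2 := by nlinarith
  have hE1 : Δk M a r + 4 * M * r - a ^ 2 * Real.sin θ ^ 2 ≤ 5 * r ^ 2 := by nlinarith
  have hB0 : 0 ≤ B := by
    have : 0 ≤ r - (2 * M - R) := by linarith
    positivity
  have hB1 : B ≤ 9 * r ^ 3 := by
    have h1 := mul_le_mul (show r - (2 * M - R) ≤ r by linarith) hE1 hE0 hr0.le
    have h2 : M ^ 2 * r ≤ r ^ 2 * r := by gcongr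
    rw [hB]; linarith
  have hB2 : B ^ 2 ≤ (9 * r ^ 3) ^ 2 := by gcongr
  rw [hfac, div_pow, div_le_iff₀ (by positivity), hΔ]
  have hd0 : 0 < r - R := by linarith
  have hsmall : 81 * a ^ 2 * r ^ 2 ≤ M ^ 2 * R ^ 2 := by
    calc 81 * a ^ 2 * r ^ 2 ≤ 81 * (M / 100) ^ 2 * (10 * M) ^ 2 := by gcongr
      _ ≤ M ^ 2 * M ^ 2 := by nlinarith [sq_nonneg (M ^ 2)]
      _ ≤ M ^ 2 * R ^ 2 := by gcongr
  calc (a * (r - R) * B) ^ 2 = a ^ 2 * (r - R) ^ 2 * B ^ 2 := by ring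
    _ ≤ a ^ 2 * (r - R) ^ 2 * (9 * r ^ 3) ^ 2 := by gcongr
    _ = (81 * a ^ 2 * r ^ 2) * (r ^ 4 * (r - R) * (r - R)) := by ring
    _ ≤ (M ^ 2 * R ^ 2) * (r ^ 4 * (r - R) * (r - (2 * M - R))) := by
        gcongr
        linarith
    _ = 1 / 4 * r ^ 4 * ((r - R) * (r - (2 * M - R))) * (2 * M * R) ^ 2 := by ring

/-- Away from the horizon `Δ` is comparable to `r²`, and smallness of `a` suffices. -/
lemma far_estimate {M a r c : ℝ} (θ : ℝ) (hM : 0 < M) (ha : |a| ≤ M / 100)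
    (hr10 : 10 * M ≤ r) (hc0 : 0 ≤ c) (hc1 : c ≤ 1) (hc : 11 * M ≤ r → c = 0) :
    (PiK M a r θ * (c * ωH M a) - 2 * a * M * r) ^ 2 ≤ 1 / 4 * r ^ 4 * Δk M a r := by
  have ha2 : a ^ 2 ≤ (M / 100) ^ 2 := sq_le_sq' (by linarith [abs_le.1 ha]) (abs_le.1 ha).2
  have hr0 : 0 < r := by linarith
  have hD : r ^ 2 / 2 ≤ Δk M a r := by unfold Δk; nlinarith [sq_nonneg a]
  have hlow : 1 / 8 * r ^ 6 ≤ 1 / 4 * r ^ 4 * Δk M a r := by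
    calc 1 / 8 * r ^ 6 = 1 / 4 * r ^ 4 * (r ^ 2 / 2) := by ring
      _ ≤ _ := by gcongr
  refine le_trans ?_ hlow
  rcases le_total (11 * M) r with h11 | h11
  · rw [hc h11]
    calc (PiK M a r θ * (0 * ωH M a) - 2 * a * M * r) ^ 2 = 4 * a ^ 2 * M ^ 2 * r ^ 2 := by ring
      _ ≤ 4 * (M / 100) ^ 2 * M ^ 2 * r ^ 2 := by gcongr
      _ ≤ 4 * (r / 100) ^ 2 * r ^ 2 * r ^ 2 := by gcongr <;> linarith
      _ ≤ 1 / 8 * r ^ 6 := by nlinarith [pow_pos hr0 6]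
  · have hω : |ωH M a| ≤ |a| / M ^ 2 := by
      unfold ωH
      rw [abs_div]
      have hRM : M ≤ rplus M a := by
        unfold rplus; linarith [Real.sqrt_nonneg (M ^ 2 - a ^ 2)]
      rw [abs_of_nonneg (a := rplus M a ^ 2 + a ^ 2) (by positivity)]
      have : M ^ 2 ≤ rplus M a ^ 2 := by gcongr
      gcongr
      nlinarith [sq_nonneg a]
    have hP0 : 0 ≤ PiK M a r θ :=
      le_trans (by positivity) (PiK_ge (a := a) θ hM (by linarith : M < r))
    have hP1 : PiK M a r θ ≤ 2 * r ^ 4 := by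
      have h1 := PiK_le (M := M) (a := a) (r := r) θ (by nlinarith [sq_pos_of_pos hr0])
      have h2 : r ^ 2 + a ^ 2 ≤ 5 / 4 * r ^ 2 := by nlinarith
      have h3 : (r ^ 2 + a ^ 2) ^ 2 ≤ (5 / 4 * r ^ 2) ^ 2 := by gcongr
      nlinarith [pow_pos hr0 4]
    have habs : |PiK M a r θ * (c * ωH M a) - 2 * a * M * r| ≤ 3 * |a| * r ^ 4 / M ^ 2 := by
      have h1 : |PiK M a r θ * (c * ωH M a)| ≤ 2 * r ^ 4 * (1 * (|a| / M ^ 2)) := by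
        rw [abs_mul, abs_mul, abs_of_nonneg hP0, abs_of_nonneg hc0]
        gcongr
      have h2 : |2 * a * M * r| ≤ |a| * r ^ 4 / M ^ 2 := by
        rw [abs_mul, abs_mul, abs_mul, abs_of_pos hM, abs_of_pos hr0, abs_two,
          le_div_iff₀ (by positivity)]
        have : 2 * M ^ 3 ≤ r ^ 3 := by
          have : (10 * M) ^ 3 ≤ r ^ 3 := by gcongr
          nlinarith [pow_pos hM 3]
        calc 2 * |a| * M * r * M ^ 2 = |a| * r * (2 * M ^ 3) := by ring
          _ ≤ |a| * r * r ^ 3 := by gcongr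
          _ = |a| * r ^ 4 := by ring
      calc _ ≤ |PiK M a r θ * (c * ωH M a)| + |2 * a * M * r| := abs_sub _ _
        _ ≤ 2 * r ^ 4 * (1 * (|a| / M ^ 2)) + |a| * r ^ 4 / M ^ 2 := add_le_add h1 h2
        _ = _ := by ring
    rw [← sq_abs]
    calc _ ≤ (3 * |a| * r ^ 4 / M ^ 2) ^ 2 := by gcongr
      _ = 9 * a ^ 2 * r ^ 2 * r ^ 6 / M ^ 4 := by
        rw [div_pow, mul_pow, mul_pow, sq_abs]; ring
      _ ≤ 9 * (M / 100) ^ 2 * (11 * M) ^ 2 * r ^ 6 / M ^ 4 := by gcongr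
      _ = 1089 / 10000 * r ^ 6 := by field_simp; norm_num
      _ ≤ 1 / 8 * r ^ 6 := by nlinarith [pow_pos hr0 6]

/-- The estimate behind both timelikeness and the energy bound: the `T_⊥`-frame angular
velocity `d = χ ω_H - 2aMr/Π` of `T_χ` satisfies `(Π d)² ≤ r⁴ Δ / 4`. -/
lemma key_estimate {M a r : ℝ} {χ : ℝ → ℝ} (θ : ℝ) (hM : 0 < M) (hχ : IsCutoff M χ)
    (ha : |a| ≤ M / 100) (hr : rplus M a < r) :
    (PiK M a r θ * (χ r * ωH M a) - 2 * a * M * r) ^ 2 ≤ 1 / 4 * r ^ 4 * Δk M a r := by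
  rcases le_total r (10 * M) with h | h
  · rw [hχ.2.2.1 r h, one_mul]
    exact near_estimate θ hM ha hr h
  · exact far_estimate θ hM ha h (hχ.nonneg r) (hχ.le_one r) (hχ.2.2.2 r)

/-- `g(T, T)` for `T = ∂_t + c ∂_φ` equals `(sin²θ (Π c - 2aMr)² - Δ Σ²) / (Σ Π)`. -/
lemma timelike {M a r c : ℝ} (θ : ℝ) (hM : 0 < M) (hD : 0 < Δk M a r) (hr : M < r)
    (hkey : (PiK M a r θ * c - 2 * a * M * r) ^ 2 ≤ 1 / 4 * r ^ 4 * Δk M a r) :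
    quadForm (gBL M a r θ) ![1, 0, 0, c] ![1, 0, 0, c] < 0 := by
  have hr0 : 0 < r := hM.trans hr
  have hS := SigK_ge a r θ
  have hS0 : 0 < SigK a r θ := lt_of_lt_of_le (by positivity) hS
  have hP0 : 0 < PiK M a r θ := lt_of_lt_of_le (by positivity) (PiK_ge (a := a) θ hM hr)
  have hform : quadForm (gBL M a r θ) ![1, 0, 0, c] ![1, 0, 0, c] =
      (Real.sin θ ^ 2 * (PiK M a r θ * c - 2 * a * M * r) ^ 2 - Δk M a r * SigK a r θ ^ 2) /
        (SigK a r θ * PiK M a r θ) := by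
    rw [← det_identity]
    simp [quadForm, gBL, Fin.sum_univ_four]
    field_simp
    ring
  rw [hform]
  refine div_neg_of_neg_of_pos ?_ (by positivity)
  have h1 : Real.sin θ ^ 2 * (PiK M a r θ * c - 2 * a * M * r) ^ 2 ≤
      (PiK M a r θ * c - 2 * a * M * r) ^ 2 :=
    mul_le_of_le_one_left (sq_nonneg _) (Real.sin_sq_le_one θ)
  have h2 : Δk M a r * (r ^ 2) ^ 2 ≤ Δk M a r * SigK a r θ ^ 2 := by gcongr
  have h3 : 0 < Δk M a r * r ^ 4 := by positivity
  nlinarith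

/-! ### The momentum density -/

/-- The `t`-component of the momentum in the frame `T_⊥, ∂_r, ∂_θ, ∂_φ`, which diagonalizes
`G^{αβ}`. The only cross term carries the factor `(Π χ ω_H - 2aMr)/Δ`. -/
lemma momentum_zero_eq {M a : ℝ} (χ : ℝ → ℝ) (ψ : V4 → ℝ) (x : V4)
    (hD : Δk M a (x 1) ≠ 0) (hP : PiK M a (x 1) (x 2) ≠ 0) (hs : Real.sin (x 2) ≠ 0) :
    momentum M a (Tchi M a χ) ψ 0 x =
      1 / 2 * (PiK M a (x 1) (x 2) / Δk M a (x 1)) *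
          (pd 0 ψ x + 2 * a * M * x 1 / PiK M a (x 1) (x 2) * pd 3 ψ x) ^ 2 +
        (PiK M a (x 1) (x 2) * (χ (x 1) * ωH M a) - 2 * a * M * x 1) / Δk M a (x 1) *
          (pd 0 ψ x + 2 * a * M * x 1 / PiK M a (x 1) (x 2) * pd 3 ψ x) * pd 3 ψ x +
        1 / 2 * Δk M a (x 1) * pd 1 ψ x ^ 2 + 1 / 2 * pd 2 ψ x ^ 2 +
        1 / 2 * (SigK a (x 1) (x 2) ^ 2 / (PiK M a (x 1) (x 2) * Real.sin (x 2) ^ 2)) *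
          pd 3 ψ x ^ 2 := by
  have hid := det_inv_identity M a (x 1) (x 2)
  have hS : SigK a (x 1) (x 2) ^ 2 = ((Δk M a (x 1) - a ^ 2 * Real.sin (x 2) ^ 2) *
      PiK M a (x 1) (x 2) + 4 * a ^ 2 * M ^ 2 * x 1 ^ 2 * Real.sin (x 2) ^ 2) /
        Δk M a (x 1) := by
    rw [hid]; field_simp
  rw [hS]
  simp [momentum, Tchi, Ginv, Fin.sum_univ_four]
  field_simp
  ring

/-- The `Δ (∂_tψ)²` term of the comparison quantity is controlled by the others; here
`T` stands for `T_⊥ψ` and `φ` for `∂_φψ`. -/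
lemma dt_term_le {M a r D P p0 T φ : ℝ} (hM : 0 < M) (ha2 : a ^ 2 ≤ (M / 100) ^ 2)
    (hr : M < r) (hD : 0 < D) (hDr : D ≤ r ^ 2) (hP4 : r ^ 4 ≤ P)
    (hp0 : p0 = T - 2 * a * M * r / P * φ) :
    D * p0 ^ 2 ≤ 2 * ((r ^ 2 + a ^ 2) ^ 2 / D * T ^ 2) + 2 * φ ^ 2 := by
  have hr0 : 0 < r := hM.trans hr
  have hP0 : 0 < P := lt_of_lt_of_le (by positivity) hP4
  have h1 : D * p0 ^ 2 ≤ 2 * (D * T ^ 2) + 2 * (D * (2 * a * M * r / P) ^ 2 * φ ^ 2) := by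
    rw [hp0]
    nlinarith [mul_nonneg hD.le (sq_nonneg (T + 2 * a * M * r / P * φ))]
  have h2 : D * T ^ 2 ≤ (r ^ 2 + a ^ 2) ^ 2 / D * T ^ 2 := by
    gcongr
    rw [le_div_iff₀ hD]
    nlinarith [sq_nonneg a]
  have h3 : D * (2 * a * M * r / P) ^ 2 ≤ 1 := by
    rw [div_pow, mul_div_assoc', div_le_one (by positivity)]
    calc D * (2 * a * M * r) ^ 2 = 4 * a ^ 2 * M ^ 2 * r ^ 2 * D := by ring
      _ ≤ 4 * (M / 100) ^ 2 * M ^ 2 * r ^ 2 * r ^ 2 := by gcongr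
      _ ≤ 4 * (r / 100) ^ 2 * r ^ 2 * r ^ 2 * r ^ 2 := by gcongr
      _ ≤ (r ^ 4) ^ 2 := by nlinarith [pow_pos hr0 8]
      _ ≤ P ^ 2 := by gcongr
  have h4 := mul_le_of_le_one_left (sq_nonneg φ) h3
  linarith

/-- The cross term of the momentum density, bounded by Cauchy–Schwarz and the estimate on the
angular velocity; `T` stands for `T_⊥ψ`, `φ` for `∂_φψ`, and `K` for `Π d`. -/
lemma cross_term_le {r D P S s K T φ : ℝ} (hD : 0 < D) (hP0 : 0 < P) (hs : 0 < s)
    (hs1 : s ^ 2 ≤ 1) (hSS : r ^ 4 ≤ S ^ 2) (hkey : K ^ 2 ≤ 1 / 4 * r ^ 4 * D) :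
    |K / D * T * φ| ≤ 1 / 4 * (P / D * T ^ 2) + 1 / 4 * (S ^ 2 / (P * s ^ 2) * φ ^ 2) := by
  have hA0 : 0 ≤ P / D * T ^ 2 := by positivity
  have hB0 : 0 ≤ S ^ 2 / (P * s ^ 2) * φ ^ 2 := by positivity
  have hsq : (K / D * T * φ) ^ 2 ≤
      1 / 4 * ((P / D * T ^ 2) * (S ^ 2 / (P * s ^ 2) * φ ^ 2)) := by
    have hk : K ^ 2 / D ≤ 1 / 4 * (S ^ 2 / s ^ 2) := by
      rw [div_le_iff₀ hD]
      have h5 : S ^ 2 ≤ S ^ 2 / s ^ 2 := by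
        rw [le_div_iff₀ (by positivity)]
        exact mul_le_of_le_one_right (sq_nonneg _) hs1
      have h6 : r ^ 4 * D ≤ S ^ 2 / s ^ 2 * D := by
        gcongr
        linarith
      linarith
    calc _ = K ^ 2 / D * (T ^ 2 * φ ^ 2 / D) := by
          field_simp
      _ ≤ 1 / 4 * (S ^ 2 / s ^ 2) * (T ^ 2 * φ ^ 2 / D) := by gcongr
      _ = _ := by field_simp
  refine abs_le_of_sq_le_sq ?_ (by positivity)
  nlinarith [sq_nonneg (P / D * T ^ 2 - S ^ 2 / (P * s ^ 2) * φ ^ 2)]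

/-- Comparability of the coefficients of `(T_⊥ψ)²` and of `(∂_φψ)²` in the momentum density and
in the comparison quantity. -/
lemma coeff_comparison {a r D P S s T φ : ℝ} (hr0 : 0 < r) (hD : 0 < D) (hs : 0 < s)
    (har : a ^ 2 ≤ r ^ 2) (hPge : (r ^ 2 + a ^ 2) * r ^ 2 ≤ P)
    (hPle : P ≤ (r ^ 2 + a ^ 2) ^ 2) (hSS : r ^ 4 ≤ S ^ 2) (hSP : S ^ 2 ≤ P) :
    P / D * T ^ 2 ≤ (r ^ 2 + a ^ 2) ^ 2 / D * T ^ 2 ∧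
    (r ^ 2 + a ^ 2) ^ 2 / D * T ^ 2 ≤ 2 * (P / D * T ^ 2) ∧
    S ^ 2 / (P * s ^ 2) * φ ^ 2 ≤ φ ^ 2 / s ^ 2 ∧
    φ ^ 2 / s ^ 2 ≤ 4 * (S ^ 2 / (P * s ^ 2) * φ ^ 2) := by
  have hP0 : 0 < P := lt_of_lt_of_le (by positivity) hPge
  have hA1 : P / D * T ^ 2 ≤ (r ^ 2 + a ^ 2) ^ 2 / D * T ^ 2 := by gcongr
  have hA2 : (r ^ 2 + a ^ 2) ^ 2 / D * T ^ 2 ≤ 2 * (P / D * T ^ 2) := by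
    have : (r ^ 2 + a ^ 2) ^ 2 ≤ 2 * P := by nlinarith [sq_nonneg a]
    calc (r ^ 2 + a ^ 2) ^ 2 / D * T ^ 2 ≤ (2 * P) / D * T ^ 2 := by gcongr
      _ = _ := by ring
  have hB1 : S ^ 2 / (P * s ^ 2) * φ ^ 2 ≤ φ ^ 2 / s ^ 2 := by
    calc S ^ 2 / (P * s ^ 2) * φ ^ 2 ≤ P / (P * s ^ 2) * φ ^ 2 := by gcongr
      _ = _ := by field_simp
  have hB2 : φ ^ 2 / s ^ 2 ≤ 4 * (S ^ 2 / (P * s ^ 2) * φ ^ 2) := by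
    have : P ≤ 4 * S ^ 2 := by
      have : (r ^ 2 + a ^ 2) ^ 2 ≤ (2 * r ^ 2) ^ 2 := by gcongr; linarith
      nlinarith
    calc φ ^ 2 / s ^ 2 = P / (P * s ^ 2) * φ ^ 2 := by field_simp
      _ ≤ (4 * S ^ 2) / (P * s ^ 2) * φ ^ 2 := by gcongr
      _ = _ := by ring
  exact ⟨hA1, hA2, hB1, hB2⟩

/-- The cross term is absorbed into the diagonal part of the momentum density, whose coefficients
are comparable to those of the comparison quantity. -/
lemma momentum_bounds {M a : ℝ} {χ : ℝ → ℝ} (ψ : V4 → ℝ) {x : V4} (hM : 0 < M)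
    (ha : |a| ≤ M / 100) (hD : 0 < Δk M a (x 1)) (hr : M < x 1) (hs : 0 < Real.sin (x 2))
    (hkey : (PiK M a (x 1) (x 2) * (χ (x 1) * ωH M a) - 2 * a * M * x 1) ^ 2 ≤
      1 / 4 * x 1 ^ 4 * Δk M a (x 1)) :
    (48 : ℝ)⁻¹ *
        ((x 1 ^ 2 + a ^ 2) ^ 2 / Δk M a (x 1) *
            (pd 0 ψ x + 2 * a * M * x 1 / PiK M a (x 1) (x 2) * pd 3 ψ x) ^ 2 +
          Δk M a (x 1) * (pd 1 ψ x) ^ 2 + Δk M a (x 1) * (pd 0 ψ x) ^ 2 +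
          ((pd 2 ψ x) ^ 2 +
            Real.cos (x 2) ^ 2 / Real.sin (x 2) ^ 2 * (pd 3 ψ x) ^ 2 +
            (pd 3 ψ x) ^ 2)) ≤
      momentum M a (Tchi M a χ) ψ 0 x ∧
    momentum M a (Tchi M a χ) ψ 0 x ≤
      48 *
        ((x 1 ^ 2 + a ^ 2) ^ 2 / Δk M a (x 1) *
            (pd 0 ψ x + 2 * a * M * x 1 / PiK M a (x 1) (x 2) * pd 3 ψ x) ^ 2 +
          Δk M a (x 1) * (pd 1 ψ x) ^ 2 + Δk M a (x 1) * (pd 0 ψ x) ^ 2 +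
          ((pd 2 ψ x) ^ 2 +
            Real.cos (x 2) ^ 2 / Real.sin (x 2) ^ 2 * (pd 3 ψ x) ^ 2 +
            (pd 3 ψ x) ^ 2)) := by
  have hr0 : 0 < x 1 := hM.trans hr
  have hPge := PiK_ge (a := a) (x 2) hM hr
  have hP0 : 0 < PiK M a (x 1) (x 2) := lt_of_lt_of_le (by positivity) hPge
  have hPle := PiK_le (x 2) hD
  have hSP := SigK_sq_le (a := a) (x 2) hM hr
  have hSge := SigK_ge a (x 1) (x 2)
  have ha2 : a ^ 2 ≤ (M / 100) ^ 2 := sq_le_sq' (by linarith [abs_le.1 ha]) (abs_le.1 ha).2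
  rw [momentum_zero_eq χ ψ x hD.ne' hP0.ne' hs.ne']
  have hcot : Real.cos (x 2) ^ 2 / Real.sin (x 2) ^ 2 * (pd 3 ψ x) ^ 2 + (pd 3 ψ x) ^ 2 =
      (pd 3 ψ x) ^ 2 / Real.sin (x 2) ^ 2 := by
    rw [Real.cos_sq']; field_simp; ring
  have hp0 : pd 0 ψ x = (pd 0 ψ x + 2 * a * M * x 1 / PiK M a (x 1) (x 2) * pd 3 ψ x) -
      2 * a * M * x 1 / PiK M a (x 1) (x 2) * pd 3 ψ x := by ring
  have hSle := SigK_le a (x 1) (x 2)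
  have hs1 := Real.sin_sq_le_one (x 2)
  rw [add_assoc (pd 2 ψ x ^ 2), hcot]
  generalize hT : pd 0 ψ x + 2 * a * M * x 1 / PiK M a (x 1) (x 2) * pd 3 ψ x = T at *
  generalize pd 0 ψ x = p0 at *
  generalize pd 1 ψ x = p1 at *
  generalize pd 2 ψ x = p2 at *
  generalize pd 3 ψ x = φ at *
  generalize χ (x 1) * ωH M a = c at *
  have hDr : Δk M a (x 1) ≤ x 1 ^ 2 := by unfold Δk; nlinarith
  have har : a ^ 2 ≤ x 1 ^ 2 := by nlinarith
  generalize x 1 = r at *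
  generalize PiK M a r (x 2) = P at *
  generalize Δk M a r = D at *
  generalize SigK a r (x 2) = S at *
  generalize Real.sin (x 2) = s at *
  have hSS : r ^ 4 ≤ S ^ 2 := by
    calc r ^ 4 = (r ^ 2) ^ 2 := by ring
      _ ≤ S ^ 2 := by gcongr
  have hP4 : r ^ 4 ≤ P := hSS.trans hSP
  obtain ⟨hA1, hA2, hB1, hB2⟩ :=
    coeff_comparison (T := T) (φ := φ) hr0 hD hs har hPge hPle hSS hSP
  have hφ : φ ^ 2 ≤ φ ^ 2 / s ^ 2 := by
    rw [le_div_iff₀ (by positivity)]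
    exact mul_le_of_le_one_right (sq_nonneg _) hs1
  have hp := dt_term_le hM ha2 hr hD hDr hP4 hp0
  have hcross := cross_term_le (T := T) (φ := φ) hD hP0 hs hs1 hSS hkey
  obtain ⟨hc1, hc2⟩ := abs_le.1 hcross
  have hp1 : 0 ≤ D * p1 ^ 2 := by positivity
  have hp2 : 0 ≤ p2 ^ 2 := by positivity
  have hDp0 : 0 ≤ D * p0 ^ 2 := by positivity
  have hA0 : 0 ≤ P / D * T ^ 2 := by positivity
  have hB0 : 0 ≤ S ^ 2 / (P * s ^ 2) * φ ^ 2 := by positivity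
  constructor <;> linarith

/-! ### Partial derivatives of smooth functions -/

lemma isOpen_ext (M a : ℝ) : IsOpen (ext M a) := by
  unfold ext
  exact (isOpen_lt continuous_const (continuous_apply 1)).inter
    ((isOpen_lt continuous_const (continuous_apply 2)).inter
      (isOpen_lt (continuous_apply 2) continuous_const))

lemma hasDerivAt_pd_fderiv {u : V4 → ℝ} {x : V4} (i : Fin 4) (h : DifferentiableAt ℝ u x) :
    HasDerivAt (fun s => u (Function.update x i s)) (fderiv ℝ u x (Pi.single i 1)) (x i) := by
  have h1 : HasFDerivAt u (fderiv ℝ u x) (Function.update x i (x i)) := by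
    rw [Function.update_eq_self]; exact h.hasFDerivAt
  exact h1.comp_hasDerivAt (x i) (hasDerivAt_update x i (x i))

lemma pd_eq_fderiv {u : V4 → ℝ} {x : V4} (i : Fin 4) (h : DifferentiableAt ℝ u x) :
    pd i u x = fderiv ℝ u x (Pi.single i 1) :=
  (hasDerivAt_pd_fderiv i h).deriv

lemma hasDerivAt_pd {u : V4 → ℝ} {x : V4} (i : Fin 4) (h : DifferentiableAt ℝ u x) :
    HasDerivAt (fun s => u (Function.update x i s)) (pd i u x) (x i) :=
  pd_eq_fderiv i h ▸ hasDerivAt_pd_fderiv i h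

lemma contDiffOn_pd {M a : ℝ} {u : V4 → ℝ} (i : Fin 4)
    (h : ContDiffOn ℝ (⊤ : ℕ∞) u (ext M a)) : ContDiffOn ℝ (⊤ : ℕ∞) (pd i u) (ext M a) := by
  have h1 : ContDiffOn ℝ (⊤ : ℕ∞) (fderiv ℝ u) (ext M a) :=
    h.fderiv_of_isOpen (isOpen_ext M a) (by simp)
  refine (h1.clm_apply (contDiffOn_const (c := Pi.single i (1 : ℝ)))).congr fun y hy => ?_
  exact pd_eq_fderiv i
    ((h.contDiffAt ((isOpen_ext M a).mem_nhds hy)).differentiableAt (by simp))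

lemma differentiableAt_of_ext {M a : ℝ} {u : V4 → ℝ} {x : V4}
    (h : ContDiffOn ℝ (⊤ : ℕ∞) u (ext M a)) (hx : x ∈ ext M a) : DifferentiableAt ℝ u x :=
  (h.contDiffAt ((isOpen_ext M a).mem_nhds hx)).differentiableAt (by simp)

lemma pd_pd_eq {M a : ℝ} {u : V4 → ℝ} {x : V4} (i j : Fin 4)
    (h : ContDiffOn ℝ (⊤ : ℕ∞) u (ext M a)) (hx : x ∈ ext M a) :
    pd i (pd j u) x = fderiv ℝ (fderiv ℝ u) x (Pi.single i 1) (Pi.single j 1) := by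
  rw [pd_eq_fderiv i (differentiableAt_of_ext (contDiffOn_pd j h) hx)]
  have hev : pd j u =ᶠ[𝓝 x] fun y => fderiv ℝ u y (Pi.single j 1) := by
    filter_upwards [(isOpen_ext M a).mem_nhds hx] with y hy
    exact pd_eq_fderiv j (differentiableAt_of_ext h hy)
  have h1 : ContDiffOn ℝ (⊤ : ℕ∞) (fderiv ℝ u) (ext M a) :=
    h.fderiv_of_isOpen (isOpen_ext M a) (by simp)
  have h2 : DifferentiableAt ℝ (fderiv ℝ u) x :=
    (h1.contDiffAt ((isOpen_ext M a).mem_nhds hx)).differentiableAt (by simp)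
  rw [hev.fderiv_eq, fderiv_clm_apply h2 (differentiableAt_const _)]
  simp

lemma pd_comm {M a : ℝ} {u : V4 → ℝ} {x : V4} (i j : Fin 4)
    (h : ContDiffOn ℝ (⊤ : ℕ∞) u (ext M a)) (hx : x ∈ ext M a) :
    pd i (pd j u) x = pd j (pd i u) x := by
  rw [pd_pd_eq i j h hx, pd_pd_eq j i h hx]
  exact (h.contDiffAt ((isOpen_ext M a).mem_nhds hx)).isSymmSndFDerivAt
    (by rw [minSmoothness_of_isRCLikeNormedField]; exact WithTop.coe_le_coe.2 (le_top : (2 : ℕ∞) ≤ ⊤)) _ _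

/-! ### The divergence identity -/

/-- The momentum components with the metric coefficients written out. The coefficient `G^{φφ}` is
kept as `Ginv … 3 3`, since it is constant along every line on which it is differentiated. -/
lemma momentum_t (M a : ℝ) (χ : ℝ → ℝ) (ψ : V4 → ℝ) (y : V4) :
    momentum M a (Tchi M a χ) ψ 0 y =
      (PiK M a (y 1) (y 2) / Δk M a (y 1) * pd 0 ψ y +
          2 * a * M * y 1 / Δk M a (y 1) * pd 3 ψ y) *
        (pd 0 ψ y + χ (y 1) * ωH M a * pd 3 ψ y) +
      1 / 2 * (-(PiK M a (y 1) (y 2) / Δk M a (y 1)) * pd 0 ψ y ^ 2 -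
        2 * (2 * a * M * y 1 / Δk M a (y 1)) * pd 0 ψ y * pd 3 ψ y +
        Δk M a (y 1) * pd 1 ψ y ^ 2 + pd 2 ψ y ^ 2 +
        Ginv M a (y 1) (y 2) 3 3 * pd 3 ψ y ^ 2) := by
  simp [momentum, Tchi, Ginv, Fin.sum_univ_four]
  ring

lemma momentum_r (M a : ℝ) (χ : ℝ → ℝ) (ψ : V4 → ℝ) (y : V4) :
    momentum M a (Tchi M a χ) ψ 1 y =
      -(Δk M a (y 1) * pd 1 ψ y) * (pd 0 ψ y + χ (y 1) * ωH M a * pd 3 ψ y) := by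
  simp [momentum, Tchi, Ginv, Fin.sum_univ_four]
  exact Or.inl (by ring)

lemma momentum_θ (M a : ℝ) (χ : ℝ → ℝ) (ψ : V4 → ℝ) (y : V4) :
    momentum M a (Tchi M a χ) ψ 2 y =
      -pd 2 ψ y * (pd 0 ψ y + χ (y 1) * ωH M a * pd 3 ψ y) := by
  simp [momentum, Tchi, Ginv, Fin.sum_univ_four]
  exact Or.inl (by ring)

lemma momentum_φ (M a : ℝ) (χ : ℝ → ℝ) (ψ : V4 → ℝ) (y : V4) :
    momentum M a (Tchi M a χ) ψ 3 y =
      (2 * a * M * y 1 / Δk M a (y 1) * pd 0 ψ y - Ginv M a (y 1) (y 2) 3 3 * pd 3 ψ y) *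
        (pd 0 ψ y + χ (y 1) * ωH M a * pd 3 ψ y) +
      1 / 2 * (χ (y 1) * ωH M a) * (-(PiK M a (y 1) (y 2) / Δk M a (y 1)) * pd 0 ψ y ^ 2 -
        2 * (2 * a * M * y 1 / Δk M a (y 1)) * pd 0 ψ y * pd 3 ψ y +
        Δk M a (y 1) * pd 1 ψ y ^ 2 + pd 2 ψ y ^ 2 +
        Ginv M a (y 1) (y 2) 3 3 * pd 3 ψ y ^ 2) := by
  simp [momentum, Tchi, Ginv, Fin.sum_univ_four]
  ring

/-- Product rule for the Lagrangian density `G^{ρσ} p_ρ p_σ` with constant coefficients. -/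
lemma hasDerivAt_lagrangian {A B D W : ℝ} {p0 p1 p2 p3 : ℝ → ℝ} {q0 q1 q2 q3 t : ℝ}
    (h0 : HasDerivAt p0 q0 t) (h1 : HasDerivAt p1 q1 t) (h2 : HasDerivAt p2 q2 t)
    (h3 : HasDerivAt p3 q3 t) :
    HasDerivAt (fun s => -A * p0 s ^ 2 - 2 * B * p0 s * p3 s + D * p1 s ^ 2 + p2 s ^ 2 +
        W * p3 s ^ 2)
      (2 * (-A * p0 t * q0 - B * (q0 * p3 t + p0 t * q3) + D * p1 t * q1 + p2 t * q2 +
        W * p3 t * q3)) t := by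
  refine ((((((h0.pow 2).const_mul (-A)).sub ((h0.const_mul (2 * B)).mul h3)).add
    ((h1.pow 2).const_mul D)).add (h2.pow 2)).add ((h3.pow 2).const_mul W)).congr_deriv ?_
  push_cast
  ring

section

variable {M a : ℝ} {χ : ℝ → ℝ} {ψ : V4 → ℝ} {x : V4}

lemma pd_momentum_t (h : ContDiffOn ℝ (⊤ : ℕ∞) ψ (ext M a)) (hx : x ∈ ext M a) :
    pd 0 (fun y => Real.sin (y 2) * momentum M a (Tchi M a χ) ψ 0 y) x =
      Real.sin (x 2) *
        ((PiK M a (x 1) (x 2) / Δk M a (x 1) * pd 0 (pd 0 ψ) x +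
            2 * a * M * x 1 / Δk M a (x 1) * pd 0 (pd 3 ψ) x) *
          (pd 0 ψ x + χ (x 1) * ωH M a * pd 3 ψ x) +
        (PiK M a (x 1) (x 2) / Δk M a (x 1) * pd 0 ψ x +
            2 * a * M * x 1 / Δk M a (x 1) * pd 3 ψ x) *
          (pd 0 (pd 0 ψ) x + χ (x 1) * ωH M a * pd 0 (pd 3 ψ) x) +
        (-(PiK M a (x 1) (x 2) / Δk M a (x 1)) * pd 0 ψ x * pd 0 (pd 0 ψ) x -
          2 * a * M * x 1 / Δk M a (x 1) *
            (pd 0 (pd 0 ψ) x * pd 3 ψ x + pd 0 ψ x * pd 0 (pd 3 ψ) x) +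
          Δk M a (x 1) * pd 1 ψ x * pd 0 (pd 1 ψ) x + pd 2 ψ x * pd 0 (pd 2 ψ) x +
          Ginv M a (x 1) (x 2) 3 3 * pd 3 ψ x * pd 0 (pd 3 ψ) x)) := by
  have hp (j : Fin 4) := hasDerivAt_pd 0 (differentiableAt_of_ext (contDiffOn_pd j h) hx)
  refine HasDerivAt.deriv ?_
  simp only [momentum_t]
  have hu1 (s : ℝ) : Function.update x 0 s 1 = x 1 := rfl
  have hu2 (s : ℝ) : Function.update x 0 s 2 = x 2 := rfl
  simp only [hu1, hu2]
  refine HasDerivAt.congr_deriv (((((hp 0).const_mul _).add ((hp 3).const_mul _)).mul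
    ((hp 0).add ((hp 3).const_mul _))).add
      ((hasDerivAt_lagrangian (hp 0) (hp 1) (hp 2) (hp 3)).const_mul _) |>.const_mul _) ?_
  simp only [Function.update_eq_self, Pi.add_apply]
  ring

lemma pd_momentum_φ (h : ContDiffOn ℝ (⊤ : ℕ∞) ψ (ext M a)) (hx : x ∈ ext M a) :
    pd 3 (fun y => Real.sin (y 2) * momentum M a (Tchi M a χ) ψ 3 y) x =
      Real.sin (x 2) *
        ((2 * a * M * x 1 / Δk M a (x 1) * pd 3 (pd 0 ψ) x -
            Ginv M a (x 1) (x 2) 3 3 * pd 3 (pd 3 ψ) x) *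
          (pd 0 ψ x + χ (x 1) * ωH M a * pd 3 ψ x) +
        (2 * a * M * x 1 / Δk M a (x 1) * pd 0 ψ x - Ginv M a (x 1) (x 2) 3 3 * pd 3 ψ x) *
          (pd 3 (pd 0 ψ) x + χ (x 1) * ωH M a * pd 3 (pd 3 ψ) x) +
        χ (x 1) * ωH M a *
          (-(PiK M a (x 1) (x 2) / Δk M a (x 1)) * pd 0 ψ x * pd 3 (pd 0 ψ) x -
          2 * a * M * x 1 / Δk M a (x 1) *
            (pd 3 (pd 0 ψ) x * pd 3 ψ x + pd 0 ψ x * pd 3 (pd 3 ψ) x) +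
          Δk M a (x 1) * pd 1 ψ x * pd 3 (pd 1 ψ) x + pd 2 ψ x * pd 3 (pd 2 ψ) x +
          Ginv M a (x 1) (x 2) 3 3 * pd 3 ψ x * pd 3 (pd 3 ψ) x)) := by
  have hp (j : Fin 4) := hasDerivAt_pd 3 (differentiableAt_of_ext (contDiffOn_pd j h) hx)
  refine HasDerivAt.deriv ?_
  simp only [momentum_φ]
  have hu1 (s : ℝ) : Function.update x 3 s 1 = x 1 := rfl
  have hu2 (s : ℝ) : Function.update x 3 s 2 = x 2 := rfl
  simp only [hu1, hu2]
  refine HasDerivAt.congr_deriv (((((hp 0).const_mul _).sub ((hp 3).const_mul _)).mul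
    ((hp 0).add ((hp 3).const_mul _))).add
      ((hasDerivAt_lagrangian (hp 0) (hp 1) (hp 2) (hp 3)).const_mul _) |>.const_mul _) ?_
  simp only [Function.update_eq_self, Pi.add_apply, Pi.sub_apply]
  ring

/-- The radial term is differentiated with `Δ ∂_rψ` as one factor, so that the radial part of the
wave operator appears unexpanded. The last summand comes from the cutoff. -/
lemma pd_momentum_r (hχ : ContDiff ℝ (⊤ : ℕ∞) χ) (h : ContDiffOn ℝ (⊤ : ℕ∞) ψ (ext M a))
    (hx : x ∈ ext M a) :
    pd 1 (fun y => Real.sin (y 2) * momentum M a (Tchi M a χ) ψ 1 y) x =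
      -Real.sin (x 2) *
        (pd 1 (fun y => Δk M a (y 1) * pd 1 ψ y) x *
            (pd 0 ψ x + χ (x 1) * ωH M a * pd 3 ψ x) +
          Δk M a (x 1) * pd 1 ψ x * (pd 1 (pd 0 ψ) x + χ (x 1) * ωH M a * pd 1 (pd 3 ψ) x +
            deriv χ (x 1) * ωH M a * pd 3 ψ x)) := by
  have hp (j : Fin 4) := hasDerivAt_pd 1 (differentiableAt_of_ext (contDiffOn_pd j h) hx)
  have hΔ : DifferentiableAt ℝ (fun y : V4 => Δk M a (y 1) * pd 1 ψ y) x := by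
    refine DifferentiableAt.mul ?_ (differentiableAt_of_ext (contDiffOn_pd 1 h) hx)
    unfold Δk
    fun_prop
  have hq := hasDerivAt_pd 1 hΔ
  have hχ' : HasDerivAt χ (deriv χ (x 1)) (x 1) :=
    ((hχ.differentiable (by simp)) (x 1)).hasDerivAt
  refine HasDerivAt.deriv ?_
  simp only [momentum_r]
  have hu1 (s : ℝ) : Function.update x 1 s 1 = s := rfl
  have hu2 (s : ℝ) : Function.update x 1 s 2 = x 2 := rfl
  simp only [hu1, hu2] at hq ⊢
  refine HasDerivAt.congr_deriv
    ((hq.neg.mul ((hp 0).add ((hχ'.mul_const _).mul (hp 3)))).const_mul _) ?_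
  simp only [Function.update_eq_self, Pi.add_apply, Pi.mul_apply, Pi.neg_apply]
  ring

/-- As for the radial component, `sin θ ∂_θψ` is kept as one factor, matching the Carter
operator. -/
lemma pd_momentum_θ (h : ContDiffOn ℝ (⊤ : ℕ∞) ψ (ext M a)) (hx : x ∈ ext M a) :
    pd 2 (fun y => Real.sin (y 2) * momentum M a (Tchi M a χ) ψ 2 y) x =
      -(pd 2 (fun y => Real.sin (y 2) * pd 2 ψ y) x *
            (pd 0 ψ x + χ (x 1) * ωH M a * pd 3 ψ x) +
          Real.sin (x 2) * pd 2 ψ x *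
            (pd 2 (pd 0 ψ) x + χ (x 1) * ωH M a * pd 2 (pd 3 ψ) x)) := by
  have hp (j : Fin 4) := hasDerivAt_pd 2 (differentiableAt_of_ext (contDiffOn_pd j h) hx)
  have hs : DifferentiableAt ℝ (fun y : V4 => Real.sin (y 2) * pd 2 ψ y) x := by
    refine DifferentiableAt.mul ?_ (differentiableAt_of_ext (contDiffOn_pd 2 h) hx)
    fun_prop
  have hq := hasDerivAt_pd 2 hs
  refine HasDerivAt.deriv ?_
  have hmom (y : V4) : Real.sin (y 2) * momentum M a (Tchi M a χ) ψ 2 y =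
      -(Real.sin (y 2) * pd 2 ψ y) * (pd 0 ψ y + χ (y 1) * ωH M a * pd 3 ψ y) := by
    rw [momentum_θ]; ring
  simp only [hmom]
  have hu1 (s : ℝ) : Function.update x 2 s 1 = x 1 := rfl
  have hu2 (s : ℝ) : Function.update x 2 s 2 = s := rfl
  simp only [hu1, hu2] at hq ⊢
  refine HasDerivAt.congr_deriv (hq.neg.mul ((hp 0).add ((hp 3).const_mul _))) ?_
  simp only [Function.update_eq_self, Pi.neg_apply]
  ring

/-- Since `∂_t` and `∂_φ` are Killing, the divergence of the momentum of a solution only sees the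
radial derivative of the cutoff. -/
lemma divergence_eq (hχ : ContDiff ℝ (⊤ : ℕ∞) χ) (hψ : IsWaveSol M a ψ) (hx : x ∈ ext M a)
    (hD : Δk M a (x 1) ≠ 0) (hs : Real.sin (x 2) ≠ 0) :
    (Real.sin (x 2))⁻¹ *
        ∑ α, pd α (fun y => Real.sin (y 2) * momentum M a (Tchi M a χ) ψ α y) x =
      -(Δk M a (x 1) * ωH M a * deriv χ (x 1) * pd 3 ψ x * pd 1 ψ x) := by
  obtain ⟨h, hwave⟩ := hψ
  have hbox := hwave x hx
  rw [Fin.sum_univ_four, pd_momentum_t h hx, pd_momentum_r hχ h hx, pd_momentum_θ h hx,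
    pd_momentum_φ h hx, pd_comm 3 0 h hx, pd_comm 1 0 h hx, pd_comm 2 0 h hx,
    pd_comm 3 1 h hx, pd_comm 3 2 h hx]
  have hG : Ginv M a (x 1) (x 2) 3 3 = (Δk M a (x 1) - a ^ 2 * Real.sin (x 2) ^ 2) /
      (Δk M a (x 1) * Real.sin (x 2) ^ 2) := by
    simp [Ginv]
  -- the wave equation, solved for the radial term
  have hE : pd 1 (fun y => Δk M a (y 1) * pd 1 ψ y) x =
      PiK M a (x 1) (x 2) / Δk M a (x 1) * pd 0 (pd 0 ψ) x +
        2 * (2 * a * M * x 1 / Δk M a (x 1)) * pd 0 (pd 3 ψ) x -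
        (Δk M a (x 1) - a ^ 2 * Real.sin (x 2) ^ 2) /
          (Δk M a (x 1) * Real.sin (x 2) ^ 2) * pd 3 (pd 3 ψ) x -
        (Real.sin (x 2))⁻¹ * pd 2 (fun y => Real.sin (y 2) * pd 2 ψ y) x := by
    unfold box curlyR carterQ at hbox
    rw [Real.cos_sq'] at hbox
    rw [eq_neg_of_add_eq_zero_left hbox]
    unfold PiK
    field_simp
    ring
  rw [hE, hG]
  field_simp
  ring

end

/-- **Lemma 3.1 (Properties of the blended vector field T_χ).** -/
theorem blended_vector_field_properties (M : ℝ) (hM : 0 < M) (χ : ℝ → ℝ)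
    (hχ : IsCutoff M χ) :
    ∃ abar C : ℝ, 0 < abar ∧ abar ≤ M ∧ 0 < C ∧
      ∀ a : ℝ, |a| ≤ abar →
        -- (i) T_χ is timelike on the exterior region
        (∀ x ∈ ext M a,
          quadForm (gBL M a (x 1) (x 2)) (Tchi M a χ x) (Tchi M a χ x) < 0) ∧
        -- (ii) uniform two-sided bound on the momentum density
        (∀ ψ : V4 → ℝ, ContDiffOn ℝ (⊤ : ℕ∞) ψ (ext M a) →
          ∀ x ∈ ext M a,
            C⁻¹ *
                ((x 1 ^ 2 + a ^ 2) ^ 2 / Δk M a (x 1) *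
                    (pd 0 ψ x + 2 * a * M * x 1 / PiK M a (x 1) (x 2) * pd 3 ψ x) ^ 2 +
                  Δk M a (x 1) * (pd 1 ψ x) ^ 2 + Δk M a (x 1) * (pd 0 ψ x) ^ 2 +
                  ((pd 2 ψ x) ^ 2 +
                    Real.cos (x 2) ^ 2 / Real.sin (x 2) ^ 2 * (pd 3 ψ x) ^ 2 +
                    (pd 3 ψ x) ^ 2)) ≤
              momentum M a (Tchi M a χ) ψ 0 x ∧
            momentum M a (Tchi M a χ) ψ 0 x ≤
              C *
                ((x 1 ^ 2 + a ^ 2) ^ 2 / Δk M a (x 1) *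
                    (pd 0 ψ x + 2 * a * M * x 1 / PiK M a (x 1) (x 2) * pd 3 ψ x) ^ 2 +
                  Δk M a (x 1) * (pd 1 ψ x) ^ 2 + Δk M a (x 1) * (pd 0 ψ x) ^ 2 +
                  ((pd 2 ψ x) ^ 2 +
                    Real.cos (x 2) ^ 2 / Real.sin (x 2) ^ 2 * (pd 3 ψ x) ^ 2 +
                    (pd 3 ψ x) ^ 2))) ∧
        -- (iii) the divergence identity for wave solutions
        (∀ ψ : V4 → ℝ, IsWaveSol M a ψ →
          ∀ x ∈ ext M a,
            |(Real.sin (x 2))⁻¹ *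
                ∑ α, pd α (fun y => Real.sin (y 2) * momentum M a (Tchi M a χ) ψ α y) x| =
              Δk M a (x 1) * |ωH M a| * |deriv χ (x 1)| * |pd 3 ψ x| * |pd 1 ψ x|) := by
  refine ⟨M / 100, 48, by positivity, by linarith, by norm_num, fun a ha => ?_⟩
  have hpos (x : V4) (hx : x ∈ ext M a) : 0 < Δk M a (x 1) ∧ M < x 1 :=
    Δk_pos_and_lt hM (ha.trans (by linarith)) hx.1
  have hsin (x : V4) (hx : x ∈ ext M a) : 0 < Real.sin (x 2) :=
    Real.sin_pos_of_pos_of_lt_pi hx.2.1 hx.2.2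
  refine ⟨fun x hx => ?_, fun ψ _ x hx => ?_, fun ψ hψ x hx => ?_⟩
  · exact timelike (x 2) hM (hpos x hx).1 (hpos x hx).2 (key_estimate (x 2) hM hχ ha hx.1)
  · exact momentum_bounds ψ hM ha (hpos x hx).1 (hpos x hx).2 (hsin x hx)
      (key_estimate (x 2) hM hχ ha hx.1)
  · rw [divergence_eq hχ.1 hψ hx (hpos x hx).1.ne' (hsin x hx).ne', abs_neg]
    simp only [abs_mul, abs_of_pos (hpos x hx).1]

end KerrPaper
end
end

section
/- Divergence of the symmetry-indexed Morawetz momentum (Lemma 3.4): Let z₁, z₂ be smooth positive functions of r (and of the parameters M, a), and on the exterior Kerr region define ℛ̃′^a = ∂_r(z₁Δ⁻¹ℛ^a) and ℛ̃̃″^a = ∂_r(z₂ z₁^{1/2}Δ^{−1/2}ℛ̃′^a) for each a ∈ 𝕊₂. If ψ is a smooth solution of the wave equation □ψ = 0 on the exterior Kerr region, then pointwise μ⁻¹∂_α(μ P_A^α[ψ]) = Σ_{a,b} [𝒜^{(a}ℒ^{b)}(∂_rS_aψ)(∂_rS_bψ) + Σ_c 𝒰^{c(a}ℒ^{b)}S_c^{αβ}(∂_αS_aψ)(∂_βS_bψ)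 + 𝒱^{(a}ℒ^{b)}(S_aψ)(S_bψ)], where 𝒜^a = z₁^{1/2}Δ^{3/2}(−ℛ̃̃″^a), 𝒰^{ca} = (1/2)z₂ℛ̃′^cℛ̃′^a, 𝒱^a = (1/4)∂_r(Δ∂_r(z₁∂_r(z₂ℛ̃′^a))), round brackets on indices denote symmetrization, and ℒ^a are the coefficients of ℒ = ∂_t² + ∂_φ² + Q in the basis 𝕊₂. -/
/-!
The wave operator is `□ = ∂_r Δ ∂_r + Σ_c Δ⁻¹ ℛ^c S_c`, with coefficients depending only on `r`. The
operators `S_c` involve no `r`-derivative, have coefficients independent of `r`, and commute with each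
other, so they commute with `□` (`IsSym.box_comm`). Hence every `S_i ψ` again solves the wave
equation (`IsSym.solution`).

Take one pair `(i, j)` and write `f = S_i ψ`, `g = S_j ψ`. The product rule together with `□f = 0`
and the decomposition `G^{αβ} = Δ ∂_r^α ∂_r^β + Σ_c Δ⁻¹ ℛ^c S_c^{αβ}` gives the divergence of the
`(i, j)` summand (`pair_divergence`):
* the coefficient of `∂_r f ∂_r g` is `(1/2)(Δ' A − Δ A') − q Δ`, which equals `𝒜^{(i} ℒ^{j)}`;
* the coefficient of `S_c^{αβ} ∂_α f ∂_β g` is `((1/2) A' − q) Δ⁻¹ ℛ^c + (1/2) A (Δ⁻¹ ℛ^c)'`, which,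
  by the choice of `q`, is `(1/2) (A / z₁) (z₁ Δ⁻¹ ℛ^c)' = 𝒰^{c(i} ℒ^{j)}`;
* the coefficient of `f g` is `(1/2) (Δ q')' = 𝒱^{(i} ℒ^{j)}`, as `q = (1/2) z₁ (z₂ ℛ̃′^{(i})' ℒ^{j)}`;
* what remains is `pairW`, which changes sign when `f` and `g` are exchanged.
Since `A^{ij}` and `q^{ij}` are symmetric in `(i, j)`, the remainders cancel in the double sum
(`pairW_sum`).
-/

noncomputable section

open MeasureTheory Filter Topology

namespace KerrPaper

/-! ### Smooth functions on the exterior region and their partial derivatives -/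

/-- `f` is smooth on the exterior region. Nothing is assumed outside it, so identities between
operators are stated as `Set.EqOn` on `ext M a`. -/
abbrev Sm (M a : ℝ) (f : V4 → ℝ) : Prop := ContDiffOn ℝ (⊤ : ℕ∞) f (ext M a)

/-- `g` is smooth as a function of the radius on `(r₊, ∞)`. -/
abbrev SmR (M a : ℝ) (g : ℝ → ℝ) : Prop := ContDiffOn ℝ (⊤ : ℕ∞) g (Set.Ioi (rplus M a))

lemma Δk_pos {M a : ℝ} (ha : |a| ≤ M) {r : ℝ} (hr : rplus M a < r) : 0 < Δk M a r := by
  have h0 : 0 ≤ M ^ 2 - a ^ 2 := by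
    have := sq_le_sq' (by linarith [abs_nonneg a]) ha
    rw [sq_abs] at this
    linarith
  have h1 := Real.sq_sqrt h0
  have h2 := Real.sqrt_nonneg (M ^ 2 - a ^ 2)
  unfold rplus at hr
  unfold Δk
  nlinarith

lemma sin_pos_of_ext {M a : ℝ} {x : V4} (hx : x ∈ ext M a) : 0 < Real.sin (x 2) :=
  Real.sin_pos_of_pos_of_lt_pi hx.2.1 hx.2.2

/-- The coordinate line through an exterior point stays in the exterior region near that point, so
`pd i` only sees the values of a function on the exterior region. -/
lemma line_mem {M a : ℝ} {x : V4} (hx : x ∈ ext M a) (i : Fin 4) :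
    ∀ᶠ s in 𝓝 (x i), Function.update x i s ∈ ext M a := by
  have hc : Continuous fun s : ℝ => Function.update x i s :=
    continuous_const.update i continuous_id
  apply hc.continuousAt.eventually_mem
  rw [Function.update_eq_self]
  exact (isOpen_ext M a).mem_nhds hx

lemma pd_congr {M a : ℝ} {f g : V4 → ℝ} (h : Set.EqOn f g (ext M a)) (i : Fin 4) :
    Set.EqOn (pd i f) (pd i g) (ext M a) := by
  intro x hx
  apply Filter.EventuallyEq.deriv_eq
  filter_upwards [line_mem hx i] with s hs using h hs

lemma Sm.diffAt {M a : ℝ} {f : V4 → ℝ} (hf : Sm M a f) {x : V4} (hx : x ∈ ext M a) :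
    DifferentiableAt ℝ f x :=
  (hf.contDiffAt ((isOpen_ext M a).mem_nhds hx)).differentiableAt (by simp)

lemma Sm.hasDerivAt_fderiv {M a : ℝ} {f : V4 → ℝ} (hf : Sm M a f) {x : V4} (hx : x ∈ ext M a)
    (i : Fin 4) : HasDerivAt (fun s => f (Function.update x i s))
      (fderiv ℝ f x (Pi.single i 1)) (x i) := by
  have h1 := hasDerivAt_update x i (x i)
  have h2 : HasFDerivAt f (fderiv ℝ f x) (Function.update x i (x i)) := by
    rw [Function.update_eq_self]; exact (hf.diffAt hx).hasFDerivAt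
  exact h2.comp_hasDerivAt (x i) h1

lemma Sm.hasPD {M a : ℝ} {f : V4 → ℝ} (hf : Sm M a f) {x : V4} (hx : x ∈ ext M a)
    (i : Fin 4) : HasDerivAt (fun s => f (Function.update x i s)) (pd i f x) (x i) :=
  (hf.hasDerivAt_fderiv hx i).differentiableAt.hasDerivAt

lemma Sm.pd_eq {M a : ℝ} {f : V4 → ℝ} (hf : Sm M a f) (i : Fin 4) :
    Set.EqOn (pd i f) (fun x => fderiv ℝ f x (Pi.single i 1)) (ext M a) :=
  fun _ hx => (hf.hasDerivAt_fderiv hx i).deriv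

lemma Sm.fderiv {M a : ℝ} {f : V4 → ℝ} (hf : Sm M a f) :
    ContDiffOn ℝ (⊤ : ℕ∞) (fderiv ℝ f) (ext M a) :=
  hf.fderiv_of_isOpen (isOpen_ext M a) (by simp)

lemma Sm.pd {M a : ℝ} {f : V4 → ℝ} (hf : Sm M a f) (i : Fin 4) : Sm M a (pd i f) :=
  (hf.fderiv.clm_apply contDiffOn_const).congr (hf.pd_eq i)

lemma Sm.pd_comm {M a : ℝ} {f : V4 → ℝ} (hf : Sm M a f) (i j : Fin 4) :
    Set.EqOn (KerrPaper.pd i (KerrPaper.pd j f)) (KerrPaper.pd j (KerrPaper.pd i f))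
      (ext M a) := by
  have key : ∀ i j : Fin 4, ∀ x ∈ ext M a, KerrPaper.pd i (KerrPaper.pd j f) x =
      _root_.fderiv ℝ (_root_.fderiv ℝ f) x (Pi.single i 1) (Pi.single j 1) := by
    intro i j x hx
    rw [(hf.pd j).pd_eq i hx]
    have hev : KerrPaper.pd j f =ᶠ[𝓝 x] fun y => _root_.fderiv ℝ f y (Pi.single j 1) := by
      filter_upwards [(isOpen_ext M a).mem_nhds hx] with y hy using hf.pd_eq j hy
    have hd : DifferentiableAt ℝ (_root_.fderiv ℝ f) x :=
      (hf.fderiv.contDiffAt ((isOpen_ext M a).mem_nhds hx)).differentiableAt (by simp)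
    simp only [hev.fderiv_eq]
    rw [fderiv_clm_apply hd (differentiableAt_const _)]
    simp
  intro x hx
  rw [key i j x hx, key j i x hx]
  have hs : IsSymmSndFDerivAt ℝ f x :=
    (hf.contDiffAt ((isOpen_ext M a).mem_nhds hx)).isSymmSndFDerivAt
      (by simp only [minSmoothness_of_isRCLikeNormedField]; exact WithTop.coe_le_coe.2 (le_top : (2 : ℕ∞) ≤ ⊤))
  exact hs _ _

lemma Sm.of_r {M a : ℝ} {g : ℝ → ℝ} (hg : SmR M a g) : Sm M a fun y => g (y 1) :=
  hg.comp (contDiff_apply ℝ ℝ (1 : Fin 4)).contDiffOn fun _ hy => hy.1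

lemma Sm.of_theta {M a : ℝ} {g : ℝ → ℝ} (hg : ContDiffOn ℝ (⊤ : ℕ∞) g (Set.Ioo 0 Real.pi)) :
    Sm M a fun y => g (y 2) :=
  hg.comp (contDiff_apply ℝ ℝ (2 : Fin 4)).contDiffOn fun _ hy => hy.2

lemma pd_add {M a : ℝ} {f g : V4 → ℝ} (hf : Sm M a f) (hg : Sm M a g) (i : Fin 4) :
    Set.EqOn (pd i fun y => f y + g y) (fun y => pd i f y + pd i g y) (ext M a) :=
  fun _ hx => ((hf.hasPD hx i).add (hg.hasPD hx i)).deriv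

/-- A factor depending on another coordinate passes through `pd i`. No differentiability is needed,
because both sides take the junk value `0` together. -/
lemma pd_coord_mul {i k : Fin 4} (hik : k ≠ i) (g : ℝ → ℝ) (f : V4 → ℝ) :
    (pd i fun y => g (y k) * f y) = fun y => g (y k) * pd i f y := by
  funext x
  simp [pd, Function.update_of_ne hik, deriv_const_mul_field]

lemma SmR.deriv {M a : ℝ} {g : ℝ → ℝ} (hg : SmR M a g) : SmR M a (deriv g) :=
  hg.deriv_of_isOpen isOpen_Ioi (by simp)

lemma SmR.hasDerivAt {M a : ℝ} {g : ℝ → ℝ} (hg : SmR M a g) {r : ℝ} (hr : rplus M a < r) :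
    HasDerivAt g (_root_.deriv g r) r :=
  ((hg.contDiffAt (isOpen_Ioi.mem_nhds hr)).differentiableAt (by simp)).hasDerivAt

lemma SmR.Δk (M a : ℝ) : SmR M a (Δk M a) := by
  apply ContDiff.contDiffOn
  unfold KerrPaper.Δk
  fun_prop

/-- The coefficients `Δ⁻¹ ℛ^c`. -/
def kf (M a : ℝ) (c : Fin 4) (r : ℝ) : ℝ := (Δk M a r)⁻¹ * Rcoef M a r c

lemma SmR.kf {M a : ℝ} (ha : |a| ≤ M) (c : Fin 4) : SmR M a (kf M a c) := by
  have h1 : SmR M a fun r => (KerrPaper.Δk M a r)⁻¹ :=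
    (SmR.Δk M a).inv fun r hr => (Δk_pos ha hr).ne'
  refine h1.mul ?_
  apply ContDiff.contDiffOn
  fin_cases c <;> simp [Rcoef, KerrPaper.Δk] <;> fun_prop

/-! ### The Carter operator -/

lemma theta_smooth : ContDiffOn ℝ (⊤ : ℕ∞) (fun s => Real.cos s ^ 2 / Real.sin s ^ 2)
    (Set.Ioo 0 Real.pi) := by
  refine ContDiffOn.div (by fun_prop) (by fun_prop) fun s hs => ?_
  exact pow_ne_zero _ (Real.sin_pos_of_pos_of_lt_pi hs.1 hs.2).ne'

lemma Sm.carter_aux {M a : ℝ} {f : V4 → ℝ} (hf : Sm M a f) :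
    Sm M a (fun y => Real.sin (y 2) * KerrPaper.pd 2 f y) :=
  (Sm.of_theta (g := Real.sin) Real.contDiff_sin.contDiffOn).mul (hf.pd 2)

lemma Sm.carter1 {M a : ℝ} {f : V4 → ℝ} (hf : Sm M a f) :
    Sm M a (fun x => (Real.sin (x 2))⁻¹ *
      KerrPaper.pd 2 (fun y => Real.sin (y 2) * KerrPaper.pd 2 f y) x) := by
  refine ContDiffOn.mul (Sm.of_theta (g := fun s => (Real.sin s)⁻¹) ?_) (hf.carter_aux.pd 2)
  exact Real.contDiff_sin.contDiffOn.inv fun s hs => (Real.sin_pos_of_pos_of_lt_pi hs.1 hs.2).ne'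

lemma Sm.carter2 {M a : ℝ} {f : V4 → ℝ} (hf : Sm M a f) :
    Sm M a (fun x => Real.cos (x 2) ^ 2 / Real.sin (x 2) ^ 2 *
      KerrPaper.pd 3 (KerrPaper.pd 3 f) x) :=
  (Sm.of_theta theta_smooth).mul ((hf.pd 3).pd 3)

lemma Sm.carter3 {M a : ℝ} {f : V4 → ℝ} (hf : Sm M a f) :
    Sm M a (fun x => a ^ 2 * Real.sin (x 2) ^ 2 * KerrPaper.pd 0 (KerrPaper.pd 0 f) x) :=
  (Sm.of_theta (g := fun s => a ^ 2 * Real.sin s ^ 2) (by fun_prop)).mul ((hf.pd 0).pd 0)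

lemma Sm.carterQ {M a : ℝ} {f : V4 → ℝ} (hf : Sm M a f) : Sm M a (carterQ a f) :=
  (hf.carter1.add hf.carter2).add hf.carter3

lemma carterQ_congr {M a : ℝ} {f g : V4 → ℝ} (h : Set.EqOn f g (ext M a)) :
    Set.EqOn (carterQ a f) (carterQ a g) (ext M a) := by
  intro x hx
  have h2 : Set.EqOn (fun y => Real.sin (y 2) * pd 2 f y) (fun y => Real.sin (y 2) * pd 2 g y)
      (ext M a) := fun y hy => by simp only [pd_congr h 2 hy]
  simp only [carterQ, pd_congr h2 2 hx, pd_congr (pd_congr h 3) 3 hx,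
    pd_congr (pd_congr h 0) 0 hx]

lemma carterQ_add {M a : ℝ} {f g : V4 → ℝ} (hf : Sm M a f) (hg : Sm M a g) :
    Set.EqOn (carterQ a fun y => f y + g y) (fun y => carterQ a f y + carterQ a g y)
      (ext M a) := by
  intro x hx
  have h2 : Set.EqOn (fun y => Real.sin (y 2) * pd 2 (fun z => f z + g z) y)
      (fun y => Real.sin (y 2) * pd 2 f y + Real.sin (y 2) * pd 2 g y) (ext M a) :=
    fun y hy => by simp only [pd_add hf hg 2 hy, mul_add]
  simp only [carterQ, pd_congr h2 2 hx, pd_congr (pd_add hf hg 3) 3 hx,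
    pd_congr (pd_add hf hg 0) 0 hx, pd_add hf.carter_aux hg.carter_aux 2 hx,
    pd_add (hf.pd 3) (hg.pd 3) 3 hx, pd_add (hf.pd 0) (hg.pd 0) 0 hx]
  ring

lemma carterQ_mul (a : ℝ) (g : ℝ → ℝ) (f : V4 → ℝ) :
    (carterQ a fun y => g (y 1) * f y) = fun y => g (y 1) * carterQ a f y := by
  funext x
  have h2 : (fun y : V4 => Real.sin (y 2) * (g (y 1) * pd 2 f y)) =
      fun y => g (y 1) * (Real.sin (y 2) * pd 2 f y) := by funext y; ring
  simp only [carterQ, pd_coord_mul (show (1 : Fin 4) ≠ 2 by decide),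
    pd_coord_mul (show (1 : Fin 4) ≠ 3 by decide),
    pd_coord_mul (show (1 : Fin 4) ≠ 0 by decide), h2]
  ring

/-- `Q` commutes with `∂_t`, `∂_r` and `∂_φ`, since its coefficients depend on `θ` only. -/
lemma pd_carterQ {M a : ℝ} {f : V4 → ℝ} (hf : Sm M a f) {i : Fin 4} (hi : (2 : Fin 4) ≠ i) :
    Set.EqOn (pd i (carterQ a f)) (carterQ a (pd i f)) (ext M a) := by
  intro x hx
  have e : carterQ a f = fun x => ((Real.sin (x 2))⁻¹ *
      pd 2 (fun y => Real.sin (y 2) * pd 2 f y) x +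
      Real.cos (x 2) ^ 2 / Real.sin (x 2) ^ 2 * pd 3 (pd 3 f) x) +
      a ^ 2 * Real.sin (x 2) ^ 2 * pd 0 (pd 0 f) x := rfl
  rw [e, pd_add (hf.carter1.add hf.carter2) hf.carter3 i hx]
  dsimp only
  rw [pd_add hf.carter1 hf.carter2 i hx]
  dsimp only
  rw [pd_coord_mul hi (fun s => (Real.sin s)⁻¹),
    pd_coord_mul hi (fun s => Real.cos s ^ 2 / Real.sin s ^ 2),
    pd_coord_mul hi (fun s => a ^ 2 * Real.sin s ^ 2)]
  have h2 : Set.EqOn (fun y => Real.sin (y 2) * pd i (pd 2 f) y)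
      (fun y => Real.sin (y 2) * pd 2 (pd i f) y) (ext M a) :=
    fun y hy => by simp only [hf.pd_comm i 2 hy]
  have h1 : pd i (pd 2 fun y => Real.sin (y 2) * pd 2 f y) x =
      pd 2 (fun y => Real.sin (y 2) * pd 2 (pd i f) y) x := by
    rw [hf.carter_aux.pd_comm i 2 hx, pd_coord_mul hi Real.sin, pd_congr h2 2 hx]
  have h3 : ∀ k, pd i (pd k (pd k f)) x = pd k (pd k (pd i f)) x := fun k => by
    rw [(hf.pd k).pd_comm i k hx, pd_congr (hf.pd_comm i k) k hx]
  simp only [carterQ, h1, h3]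

/-! ### Symmetry operators commute with the wave operator -/

/-- The properties of an operator `S` from which commutation with `box` follows: `S` acts on
functions smooth on the exterior region, is local and additive, and commutes with multiplication by
functions of `r`, with `∂_t`, `∂_r`, `∂_φ` (the `pd i` with `i ≠ 2`) and with `Q`. They are stable
under composition. -/
structure IsSym (M a : ℝ) (S : (V4 → ℝ) → V4 → ℝ) : Prop where
  smooth : ∀ {f}, Sm M a f → Sm M a (S f)
  congr : ∀ {f g}, Set.EqOn f g (ext M a) → Set.EqOn (S f) (S g) (ext M a)
  add : ∀ {f g}, Sm M a f → Sm M a g →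
    Set.EqOn (S fun y => f y + g y) (fun y => S f y + S g y) (ext M a)
  mul : ∀ (g : ℝ → ℝ) (f : V4 → ℝ), (S fun y => g (y 1) * f y) = fun y => g (y 1) * S f y
  comm : ∀ {f}, Sm M a f → ∀ {i : Fin 4}, (2 : Fin 4) ≠ i →
    Set.EqOn (S (pd i f)) (pd i (S f)) (ext M a)
  commQ : ∀ {f}, Sm M a f → Set.EqOn (S (carterQ a f)) (carterQ a (S f)) (ext M a)

lemma isSym_pd (M a : ℝ) {i : Fin 4} (h1 : (1 : Fin 4) ≠ i) (h2 : (2 : Fin 4) ≠ i) :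
    IsSym M a (pd i) where
  smooth hf := hf.pd i
  congr h := pd_congr h i
  add hf hg := pd_add hf hg i
  mul g f := pd_coord_mul h1 g f
  comm hf _ _ := hf.pd_comm _ _
  commQ hf := pd_carterQ hf h2

lemma isSym_carterQ (M a : ℝ) : IsSym M a (carterQ a) where
  smooth hf := hf.carterQ
  congr h := carterQ_congr h
  add hf hg := carterQ_add hf hg
  mul g f := carterQ_mul a g f
  comm hf _ hi := (pd_carterQ hf hi).symm
  commQ _ := Set.eqOn_refl _ _

lemma IsSym.comp {M a : ℝ} {S T : (V4 → ℝ) → V4 → ℝ} (hS : IsSym M a S) (hT : IsSym M a T) :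
    IsSym M a fun f => S (T f) where
  smooth hf := hS.smooth (hT.smooth hf)
  congr h := hS.congr (hT.congr h)
  add hf hg := (hS.congr (hT.add hf hg)).trans (hS.add (hT.smooth hf) (hT.smooth hg))
  mul g f := by rw [hT.mul, hS.mul]
  comm hf _ hi := (hS.congr (hT.comm hf hi)).trans (hS.comm (hT.smooth hf) hi)
  commQ hf := (hS.congr (hT.commQ hf)).trans (hS.commQ (hT.smooth hf))

lemma isSym_symS (M a : ℝ) (c : Fin 4) : IsSym M a (symS a c) := by
  have h0 := isSym_pd M a (i := 0) (by decide) (by decide)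
  have h3 := isSym_pd M a (i := 3) (by decide) (by decide)
  fin_cases c
  · exact h0.comp h0
  · exact h0.comp h3
  · exact h3.comp h3
  · exact isSym_carterQ M a

/-- The wave operator written with coefficients depending on `r` only, in front of the operators
`∂_r`, `∂_t`, `∂_φ` and `Q`. -/
lemma box_eq {M a : ℝ} (ha : |a| ≤ M) (f : V4 → ℝ) :
    Set.EqOn (box M a f) (fun y => pd 1 (fun y => Δk M a (y 1) * pd 1 f y) y +
      (kf M a 0 (y 1) * pd 0 (pd 0 f) y + (kf M a 1 (y 1) * pd 0 (pd 3 f) y +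
        (kf M a 2 (y 1) * pd 3 (pd 3 f) y + carterQ a f y)))) (ext M a) := by
  intro x hx
  have hΔ := (Δk_pos ha hx.1).ne'
  simp only [box, curlyR, kf, Rcoef]
  simp
  field_simp
  ring

lemma Sm.r_mul {M a : ℝ} {g : ℝ → ℝ} {f : V4 → ℝ} (hg : SmR M a g) (hf : Sm M a f) :
    Sm M a fun y => g (y 1) * f y := (Sm.of_r hg).mul hf

lemma IsSym.box_comm {M a : ℝ} (ha : |a| ≤ M) {S : (V4 → ℝ) → V4 → ℝ} (hS : IsSym M a S)
    {f : V4 → ℝ} (hf : Sm M a f) : Set.EqOn (S (box M a f)) (box M a (S f)) (ext M a) := by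
  intro x hx
  have t1 := Sm.r_mul (SmR.Δk M a) (hf.pd 1)
  have t2 := Sm.r_mul (SmR.kf ha 0) ((hf.pd 0).pd 0)
  have t3 := Sm.r_mul (SmR.kf ha 1) ((hf.pd 3).pd 0)
  have t4 := Sm.r_mul (SmR.kf ha 2) ((hf.pd 3).pd 3)
  have t5 := hf.carterQ
  have n0 : (2 : Fin 4) ≠ 0 := by decide
  have n1 : (2 : Fin 4) ≠ 1 := by decide
  have n3 : (2 : Fin 4) ≠ 3 := by decide
  have c2 : ∀ {i j : Fin 4}, (2 : Fin 4) ≠ i → (2 : Fin 4) ≠ j →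
      S (pd i (pd j f)) x = pd i (pd j (S f)) x := fun {i j} hi hj => by
    rw [hS.comm (hf.pd j) hi hx, pd_congr (hS.comm hf hj) i hx]
  have c1 : S (pd 1 fun y => Δk M a (y 1) * pd 1 f y) x =
      pd 1 (fun y => Δk M a (y 1) * pd 1 (S f) y) x := by
    rw [hS.comm t1 n1 hx, hS.mul]
    exact pd_congr (fun y hy => by simp only [hS.comm hf n1 hy]) 1 hx
  rw [hS.congr (box_eq ha f) hx, box_eq ha (S f) hx,
    hS.add (t1.pd 1) (t2.add (t3.add (t4.add t5))) hx]
  dsimp only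
  rw [hS.add t2 (t3.add (t4.add t5)) hx]
  dsimp only
  rw [hS.add t3 (t4.add t5) hx]
  dsimp only
  rw [hS.add t4 t5 hx]
  dsimp only
  rw [hS.mul, hS.mul, hS.mul, hS.commQ hf hx, c1]
  dsimp only
  rw [c2 n0 n0, c2 n0 n3, c2 n3 n3]

lemma IsSym.solution {M a : ℝ} (ha : |a| ≤ M) {S : (V4 → ℝ) → V4 → ℝ} (hS : IsSym M a S)
    {ψ : V4 → ℝ} (hψ : IsWaveSol M a ψ) : IsWaveSol M a (S ψ) := by
  refine ⟨hS.smooth hψ.1, fun x hx => ?_⟩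
  -- `S 0 = 0` is multiplication by the zero function of `r`.
  have h0 : Set.EqOn (box M a ψ) (fun y => (fun _ => (0 : ℝ)) (y 1) * ψ y) (ext M a) :=
    fun y hy => by simp [hψ.2 y hy]
  rw [← hS.box_comm ha hψ.1 hx, hS.congr h0 hx]
  exact (congrFun (hS.mul (fun _ => 0) ψ) x).trans (by simp)

/-! ### The momentum of a pair of functions -/

/-- The summand of `morMomentum` for one pair of indices, with `A` and `q` arbitrary functions of
`r` and with arbitrary functions `f`, `g` in place of `S_i ψ`, `S_j ψ`. -/
def pairMom (M a : ℝ) (A q : ℝ → ℝ) (f g : V4 → ℝ) (α : Fin 4) : V4 → ℝ :=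
  fun x =>
    -(∑ γ, Ginv M a (x 1) (x 2) α γ * pd γ f x) * pd 1 g x * A (x 1) +
      (1 / 2) * (if α = 1 then A (x 1) else 0) *
        (∑ ρ, ∑ σ, Ginv M a (x 1) (x 2) ρ σ * pd ρ f x * pd σ g x) +
      ∑ β, Ginv M a (x 1) (x 2) α β *
        (-(q (x 1)) * pd β f x * g x + (1 / 2) * pd β (fun y => q (y 1)) x * f x * g x)

lemma pd_r (q : ℝ → ℝ) (i : Fin 4) (x : V4) :
    pd i (fun y => q (y 1)) x = if i = 1 then deriv q (x 1) else 0 := by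
  split_ifs with h
  · subst h; simp [pd]
  · have : (1 : Fin 4) ≠ i := fun h' => h h'.symm
    simp [pd, Function.update_of_ne this]

/-- `G^{tt}`, decomposed as `Σ_c Δ⁻¹ ℛ^c S_c^{tt}`. -/
def G0 (M a r θ : ℝ) : ℝ := kf M a 0 r + a ^ 2 * Real.sin θ ^ 2

/-- `G^{tφ} = Σ_c Δ⁻¹ ℛ^c S_c^{tφ}`. -/
def G03 (M a r : ℝ) : ℝ := kf M a 1 r / 2

/-- `G^{φφ}`, decomposed as `Σ_c Δ⁻¹ ℛ^c S_c^{φφ}`. -/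
def G3 (M a r θ : ℝ) : ℝ := kf M a 2 r + Real.cos θ ^ 2 / Real.sin θ ^ 2

lemma Ginv_eq {M a r θ : ℝ} (hΔ : Δk M a r ≠ 0) (hs : Real.sin θ ≠ 0) :
    Ginv M a r θ = !![G0 M a r θ, 0, 0, G03 M a r; 0, Δk M a r, 0, 0; 0, 0, 1, 0;
      G03 M a r, 0, 0, G3 M a r θ] := by
  have e0 : -(PiK M a r θ) / Δk M a r = G0 M a r θ := by
    simp only [G0, kf, Rcoef, PiK]; simp; field_simp; ring
  have e1 : -(2 * a * M * r) / Δk M a r = G03 M a r := by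
    simp only [G03, kf, Rcoef]; simp; field_simp; ring
  have e3 : (Δk M a r - a ^ 2 * Real.sin θ ^ 2) / (Δk M a r * Real.sin θ ^ 2) = G3 M a r θ := by
    simp only [G3, kf, Rcoef]; simp; field_simp; rw [Real.cos_sq']; ring
  rw [Ginv, e0, e1, e3]

/-- The components of `sin θ • pairMom`, written out; the two agree on the exterior region. -/
def pairN (M a : ℝ) (A q : ℝ → ℝ) (f g : V4 → ℝ) (α : Fin 4) (x : V4) : ℝ :=
  Real.sin (x 2) *
  (if α = 0 then
    -(G0 M a (x 1) (x 2) * pd 0 f x + G03 M a (x 1) * pd 3 f x) *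
      (pd 1 g x * A (x 1) + q (x 1) * g x)
  else if α = 1 then
    (1 / 2) * A (x 1) * (-(Δk M a (x 1) * (pd 1 f x * pd 1 g x)) +
      G0 M a (x 1) (x 2) * (pd 0 f x * pd 0 g x) +
      G03 M a (x 1) * (pd 0 f x * pd 3 g x + pd 3 f x * pd 0 g x) + pd 2 f x * pd 2 g x +
      G3 M a (x 1) (x 2) * (pd 3 f x * pd 3 g x)) +
      Δk M a (x 1) * (-(q (x 1) * (pd 1 f x * g x)) + (1 / 2) * (deriv q (x 1) * (f x * g x)))
  else if α = 2 then -(pd 2 f x * (pd 1 g x * A (x 1) + q (x 1) * g x))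
  else -(G03 M a (x 1) * pd 0 f x + G3 M a (x 1) (x 2) * pd 3 f x) *
      (pd 1 g x * A (x 1) + q (x 1) * g x))

lemma pairMom_eq {M a : ℝ} (ha : |a| ≤ M) (A q : ℝ → ℝ) (f g : V4 → ℝ) (α : Fin 4) :
    Set.EqOn (fun y => Real.sin (y 2) * pairMom M a A q f g α y) (pairN M a A q f g α)
      (ext M a) := by
  intro x hx
  have hG := Ginv_eq (Δk_pos ha hx.1).ne' (sin_pos_of_ext hx).ne'
  fin_cases α <;> simp [pairMom, pairN, hG, Fin.sum_univ_four, pd_r, -mul_eq_mul_left_iff] <;> ring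

/-- The derivative `∂_α` of the `α`-th component `pairN … α`, by the product rule. -/
def pairD (M a : ℝ) (A q : ℝ → ℝ) (f g : V4 → ℝ) (α : Fin 4) (x : V4) : ℝ :=
  if α = 0 then
    Real.sin (x 2) * (
    -(G0 M a (x 1) (x 2) * pd 0 (pd 0 f) x + G03 M a (x 1) * pd 0 (pd 3 f) x) *
      (pd 1 g x * A (x 1) + q (x 1) * g x) +
    -(G0 M a (x 1) (x 2) * pd 0 f x + G03 M a (x 1) * pd 3 f x) *
      (pd 0 (pd 1 g) x * A (x 1) + q (x 1) * pd 0 g x))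
  else if α = 1 then
    Real.sin (x 2) * (
    (1 / 2) * deriv A (x 1) * (-(Δk M a (x 1) * (pd 1 f x * pd 1 g x)) +
      G0 M a (x 1) (x 2) * (pd 0 f x * pd 0 g x) +
      G03 M a (x 1) * (pd 0 f x * pd 3 g x + pd 3 f x * pd 0 g x) + pd 2 f x * pd 2 g x +
      G3 M a (x 1) (x 2) * (pd 3 f x * pd 3 g x)) +
    (1 / 2) * A (x 1) * (-(deriv (Δk M a) (x 1) * (pd 1 f x * pd 1 g x)) +
      -(Δk M a (x 1) * (pd 1 (pd 1 f) x * pd 1 g x + pd 1 f x * pd 1 (pd 1 g) x)) +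
      deriv (kf M a 0) (x 1) * (pd 0 f x * pd 0 g x) +
      G0 M a (x 1) (x 2) * (pd 1 (pd 0 f) x * pd 0 g x + pd 0 f x * pd 1 (pd 0 g) x) +
      deriv (kf M a 1) (x 1) / 2 * (pd 0 f x * pd 3 g x + pd 3 f x * pd 0 g x) +
      G03 M a (x 1) * (pd 1 (pd 0 f) x * pd 3 g x + pd 0 f x * pd 1 (pd 3 g) x +
        (pd 1 (pd 3 f) x * pd 0 g x + pd 3 f x * pd 1 (pd 0 g) x)) +
      (pd 1 (pd 2 f) x * pd 2 g x + pd 2 f x * pd 1 (pd 2 g) x) +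
      deriv (kf M a 2) (x 1) * (pd 3 f x * pd 3 g x) +
      G3 M a (x 1) (x 2) * (pd 1 (pd 3 f) x * pd 3 g x + pd 3 f x * pd 1 (pd 3 g) x)) +
    deriv (Δk M a) (x 1) *
      (-(q (x 1) * (pd 1 f x * g x)) + (1 / 2) * (deriv q (x 1) * (f x * g x))) +
    Δk M a (x 1) * (-(deriv q (x 1) * (pd 1 f x * g x) +
        q (x 1) * (pd 1 (pd 1 f) x * g x + pd 1 f x * pd 1 g x)) +
      (1 / 2) * (deriv (deriv q) (x 1) * (f x * g x) +
        deriv q (x 1) * (pd 1 f x * g x + f x * pd 1 g x))))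
  else if α = 2 then
    Real.cos (x 2) * (-(pd 2 f x * (pd 1 g x * A (x 1) + q (x 1) * g x))) +
    Real.sin (x 2) * (-(pd 2 (pd 2 f) x * (pd 1 g x * A (x 1) + q (x 1) * g x) +
      pd 2 f x * (pd 2 (pd 1 g) x * A (x 1) + q (x 1) * pd 2 g x)))
  else
    Real.sin (x 2) * (
    -(G03 M a (x 1) * pd 3 (pd 0 f) x + G3 M a (x 1) (x 2) * pd 3 (pd 3 f) x) *
      (pd 1 g x * A (x 1) + q (x 1) * g x) +
    -(G03 M a (x 1) * pd 0 f x + G3 M a (x 1) (x 2) * pd 3 f x) *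
      (pd 3 (pd 1 g) x * A (x 1) + q (x 1) * pd 3 g x))

lemma pairN_hasDerivAt {M a : ℝ} (ha : |a| ≤ M) {A q : ℝ → ℝ} (hA : SmR M a A) (hq : SmR M a q)
    {f g : V4 → ℝ} (hf : Sm M a f) (hg : Sm M a g) (α : Fin 4) {x : V4} (hx : x ∈ ext M a) :
    HasDerivAt (fun s => pairN M a A q f g α (Function.update x α s))
      (pairD M a A q f g α x) (x α) := by
  have F0 := fun i => (hf.pd 0).hasPD hx i
  have F1 := fun i => (hf.pd 1).hasPD hx i
  have F2 := fun i => (hf.pd 2).hasPD hx i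
  have F3 := fun i => (hf.pd 3).hasPD hx i
  have Gp0 := fun i => (hg.pd 0).hasPD hx i
  have Gp1 := fun i => (hg.pd 1).hasPD hx i
  have Gp2 := fun i => (hg.pd 2).hasPD hx i
  have Gp3 := fun i => (hg.pd 3).hasPD hx i
  have Ff := fun i => hf.hasPD hx i
  have Gg := fun i => hg.hasPD hx i
  fin_cases α
  · have h := ((((F0 0).const_mul (G0 M a (x 1) (x 2))).add
      ((F3 0).const_mul (G03 M a (x 1)))).neg.mul
      (((Gp1 0).mul_const (A (x 1))).add ((Gg 0).const_mul (q (x 1))))).const_mul (Real.sin (x 2))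
    refine (h.congr_deriv ?_).congr_of_eventuallyEq (.of_forall fun s => ?_)
    · simp [pairD, Function.update_eq_self]
    · simp [pairN]
  · have hr := hx.1
    have a1 := hA.hasDerivAt hr
    have q1 := hq.hasDerivAt hr
    have q2 := hq.deriv.hasDerivAt hr
    have d1 := (SmR.Δk M a).hasDerivAt hr
    have k0 := ((SmR.kf ha 0).hasDerivAt hr).add_const (a ^ 2 * Real.sin (x 2) ^ 2)
    have k1 := ((SmR.kf ha 1).hasDerivAt hr).div_const 2
    have k2 := ((SmR.kf ha 2).hasDerivAt hr).add_const (Real.cos (x 2) ^ 2 / Real.sin (x 2) ^ 2)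
    have h := (((a1.const_mul (1 / 2)).mul
      ((((((d1.mul ((F1 1).mul (Gp1 1))).neg).add (k0.mul ((F0 1).mul (Gp0 1)))).add
        (k1.mul (((F0 1).mul (Gp3 1)).add ((F3 1).mul (Gp0 1))))).add ((F2 1).mul (Gp2 1))).add
        (k2.mul ((F3 1).mul (Gp3 1))))).add
      (d1.mul (((q1.mul ((F1 1).mul (Gg 1))).neg).add
        ((q2.mul ((Ff 1).mul (Gg 1))).const_mul (1 / 2))))).const_mul (Real.sin (x 2))
    refine (h.congr_deriv ?_).congr_of_eventuallyEq (.of_forall fun s => ?_)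
    · simp only [Pi.add_apply, Pi.mul_apply, Pi.neg_apply, Function.update_eq_self, pairD, G0, G03,
        G3]
      simp [-mul_eq_mul_left_iff]
      ring
    · simp [pairN, G0, G03, G3]
  · have h := (Real.hasDerivAt_sin (x 2)).mul (((F2 2).mul
      (((Gp1 2).mul_const (A (x 1))).add ((Gg 2).const_mul (q (x 1))))).neg)
    refine (h.congr_deriv ?_).congr_of_eventuallyEq (.of_forall fun s => ?_)
    · simp [pairD, Function.update_eq_self]
    · simp [pairN]
  · have h := ((((F0 3).const_mul (G03 M a (x 1))).add
      ((F3 3).const_mul (G3 M a (x 1) (x 2)))).neg.mul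
      (((Gp1 3).mul_const (A (x 1))).add ((Gg 3).const_mul (q (x 1))))).const_mul (Real.sin (x 2))
    refine (h.congr_deriv ?_).congr_of_eventuallyEq (.of_forall fun s => ?_)
    · simp [pairD, Function.update_eq_self]
    · simp [pairN]

lemma pairMom_hasDerivAt {M a : ℝ} (ha : |a| ≤ M) {A q : ℝ → ℝ} (hA : SmR M a A)
    (hq : SmR M a q) {f g : V4 → ℝ} (hf : Sm M a f) (hg : Sm M a g) (α : Fin 4) {x : V4}
    (hx : x ∈ ext M a) :
    HasDerivAt (fun s => (fun y : V4 => Real.sin (y 2) * pairMom M a A q f g α y)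
      (Function.update x α s)) (pairD M a A q f g α x) (x α) := by
  refine (pairN_hasDerivAt ha hA hq hf hg α hx).congr_of_eventuallyEq ?_
  filter_upwards [line_mem hx α] with s hs using pairMom_eq ha A q f g α hs

/-- The part of the divergence of `pairMom` that is antisymmetric under exchange of `f` and `g`:
the second-derivative terms `(1/2) A (G(∂∂_r f, ∂g) − G(∂f, ∂∂_r g))` and the terms with `∂_r q`. -/
def pairW (M a : ℝ) (A q : ℝ → ℝ) (f g : V4 → ℝ) (x : V4) : ℝ :=
  (1 / 2) * A (x 1) * (
    Δk M a (x 1) * (pd 1 (pd 1 f) x * pd 1 g x - pd 1 f x * pd 1 (pd 1 g) x) +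
    G0 M a (x 1) (x 2) * (pd 1 (pd 0 f) x * pd 0 g x - pd 0 f x * pd 1 (pd 0 g) x) +
    G03 M a (x 1) * (pd 1 (pd 0 f) x * pd 3 g x + pd 1 (pd 3 f) x * pd 0 g x -
      pd 0 f x * pd 1 (pd 3 g) x - pd 3 f x * pd 1 (pd 0 g) x) +
    (pd 1 (pd 2 f) x * pd 2 g x - pd 2 f x * pd 1 (pd 2 g) x) +
    G3 M a (x 1) (x 2) * (pd 1 (pd 3 f) x * pd 3 g x - pd 3 f x * pd 1 (pd 3 g) x)) +
  (1 / 2) * Δk M a (x 1) * deriv q (x 1) * (f x * pd 1 g x - pd 1 f x * g x)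

lemma pairW_antisymm (M a : ℝ) (A q : ℝ → ℝ) (f g : V4 → ℝ) (x : V4) :
    pairW M a A q g f x = -pairW M a A q f g x := by
  unfold pairW; ring

/-- The wave equation in terms of the second-order jet of the solution. -/
lemma wave_expanded {M a : ℝ} (ha : |a| ≤ M) {f : V4 → ℝ} (hf : IsWaveSol M a f) {x : V4}
    (hx : x ∈ ext M a) :
    deriv (Δk M a) (x 1) * pd 1 f x + Δk M a (x 1) * pd 1 (pd 1 f) x +
      G0 M a (x 1) (x 2) * pd 0 (pd 0 f) x + 2 * G03 M a (x 1) * pd 0 (pd 3 f) x +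
      G3 M a (x 1) (x 2) * pd 3 (pd 3 f) x +
      (Real.sin (x 2))⁻¹ * Real.cos (x 2) * pd 2 f x + pd 2 (pd 2 f) x = 0 := by
  have h := hf.2 x hx
  have hS : Sm M a f := hf.1
  rw [box_eq ha f hx] at h
  have h1 : pd 1 (fun y => Δk M a (y 1) * pd 1 f y) x =
      deriv (Δk M a) (x 1) * pd 1 f x + Δk M a (x 1) * pd 1 (pd 1 f) x := by
    have := ((SmR.Δk M a).hasDerivAt hx.1).mul ((hS.pd 1).hasPD hx 1)
    simpa [pd, Pi.mul_def] using this.deriv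
  have h2 : pd 2 (fun y => Real.sin (y 2) * pd 2 f y) x =
      Real.cos (x 2) * pd 2 f x + Real.sin (x 2) * pd 2 (pd 2 f) x := by
    have := (Real.hasDerivAt_sin (x 2)).mul ((hS.pd 2).hasPD hx 2)
    simpa [pd, Pi.mul_def] using this.deriv
  have hs := (sin_pos_of_ext hx).ne'
  have hi : (Real.sin (x 2))⁻¹ * Real.sin (x 2) = 1 := inv_mul_cancel₀ hs
  simp only [carterQ, h1, h2] at h
  unfold G0 G03 G3
  linear_combination h - pd 2 (pd 2 f) x * hi

/-- The divergence of `pairMom` when `f` solves the wave equation: a quadratic form in the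
derivatives of `f` and `g`, a zeroth-order term, and an antisymmetric remainder. -/
lemma pair_divergence {M a : ℝ} (ha : |a| ≤ M) {A q : ℝ → ℝ} {f g : V4 → ℝ}
    (hf : IsWaveSol M a f) (hg : Sm M a g) {x : V4} (hx : x ∈ ext M a) :
    (Real.sin (x 2))⁻¹ * ∑ α, pairD M a A q f g α x =
      ((1 / 2) * (deriv (Δk M a) (x 1) * A (x 1) - Δk M a (x 1) * deriv A (x 1)) -
        q (x 1) * Δk M a (x 1)) * pd 1 f x * pd 1 g x +
      (((1 / 2) * deriv A (x 1) - q (x 1)) *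
        (G0 M a (x 1) (x 2) * (pd 0 f x * pd 0 g x) +
          G03 M a (x 1) * (pd 0 f x * pd 3 g x + pd 3 f x * pd 0 g x) + pd 2 f x * pd 2 g x +
          G3 M a (x 1) (x 2) * (pd 3 f x * pd 3 g x)) +
        (1 / 2) * A (x 1) * (deriv (kf M a 0) (x 1) * (pd 0 f x * pd 0 g x) +
          deriv (kf M a 1) (x 1) / 2 * (pd 0 f x * pd 3 g x + pd 3 f x * pd 0 g x) +
          deriv (kf M a 2) (x 1) * (pd 3 f x * pd 3 g x))) +
      (1 / 2) * (deriv (Δk M a) (x 1) * deriv q (x 1) + Δk M a (x 1) * deriv (deriv q) (x 1)) *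
        f x * g x +
      pairW M a A q f g x := by
  have hw := wave_expanded ha hf hx
  have hi : (Real.sin (x 2))⁻¹ * Real.sin (x 2) = 1 := inv_mul_cancel₀ (sin_pos_of_ext hx).ne'
  have c1 := Sm.pd_comm hf.1 3 0 hx
  have c2 := hg.pd_comm 0 1 hx
  have c3 := hg.pd_comm 2 1 hx
  have c4 := hg.pd_comm 3 1 hx
  have hdist : ∀ p q r s u : ℝ, (Real.sin (x 2))⁻¹ * (Real.sin (x 2) * p + Real.sin (x 2) * q +
      (Real.cos (x 2) * u + Real.sin (x 2) * r) + Real.sin (x 2) * s) =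
      p + q + r + s + (Real.sin (x 2))⁻¹ * Real.cos (x 2) * u := by
    intro p q r s u
    linear_combination (p + q + r + s) * hi
  simp only [Fin.sum_univ_four, pairD]
  simp only [↓reduceIte, Fin.isValue, one_ne_zero, Fin.reduceEq]
  rw [hdist, c1, c2, c3, c4]
  unfold pairW
  -- the divergence contains `□f` exactly with the factor `−(A ∂_r g + q g)`
  linear_combination (-(pd 1 g x * A (x 1) + q (x 1) * g x)) * hw

/-! ### The Morawetz coefficients -/

lemma SmR.Rtp {M a : ℝ} (ha : |a| ≤ M) {z₁ : ℝ → ℝ} (hz₁ : SmR M a z₁) (c : Fin 4) :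
    SmR M a (Rtp M a z₁ c) := by
  have h := SmR.deriv (hz₁.mul (SmR.kf ha c))
  simp only [KerrPaper.kf, ← mul_assoc] at h
  exact h

lemma Rtp_eq {M a : ℝ} (ha : |a| ≤ M) {z₁ : ℝ → ℝ} (hz₁ : SmR M a z₁) (c : Fin 4) {r : ℝ}
    (hr : rplus M a < r) :
    Rtp M a z₁ c r = deriv z₁ r * kf M a c r + z₁ r * deriv (kf M a c) r := by
  have h := ((hz₁.hasDerivAt hr).mul ((SmR.kf ha c).hasDerivAt hr)).deriv
  rw [← h, Rtp]
  congr 1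
  funext s
  simp only [Pi.mul_apply, kf, mul_assoc]

/-- `ℛ̃′^Q = z₁'`, because `Δ⁻¹ ℛ^Q = 1`. -/
lemma Rtp_three {M a : ℝ} (ha : |a| ≤ M) {z₁ : ℝ → ℝ} (hz₁ : SmR M a z₁) {r : ℝ}
    (hr : rplus M a < r) : Rtp M a z₁ 3 r = deriv z₁ r := by
  have h1 : ∀ s, rplus M a < s → kf M a 3 s = 1 := fun s hs => by
    simpa [kf, Rcoef] using inv_mul_cancel₀ (Δk_pos ha hs).ne'
  have h2 : deriv (kf M a 3) r = 0 := by
    have : kf M a 3 =ᶠ[𝓝 r] fun _ => 1 := by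
      filter_upwards [isOpen_Ioi.mem_nhds hr] with s hs using h1 s hs
    rw [this.deriv_eq, deriv_const]
  rw [Rtp_eq ha hz₁ 3 hr, h1 r hr, h2]
  ring

lemma SmR.AvecR {M a : ℝ} (ha : |a| ≤ M) {z₁ z₂ : ℝ → ℝ} (hz₁ : SmR M a z₁)
    (hz₂ : SmR M a z₂) (i j : Fin 4) : SmR M a (AvecR M a z₁ z₂ i j) :=
  (hz₁.mul hz₂).mul (contDiffOn_const.mul
    (((SmR.Rtp ha hz₁ i).mul contDiffOn_const).add ((SmR.Rtp ha hz₁ j).mul contDiffOn_const)))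

lemma SmR.qA {M a : ℝ} (ha : |a| ≤ M) {z₁ z₂ : ℝ → ℝ} (hz₁ : SmR M a z₁)
    (hz₂ : SmR M a z₂) (i j : Fin 4) : SmR M a (qA M a z₁ z₂ i j) :=
  (contDiffOn_const.mul (SmR.AvecR ha hz₁ hz₂ i j).deriv).sub
    (((contDiffOn_const.mul hz₁.deriv).mul hz₂).mul (contDiffOn_const.mul
    (((SmR.Rtp ha hz₁ i).mul contDiffOn_const).add ((SmR.Rtp ha hz₁ j).mul contDiffOn_const))))

lemma deriv_AvecR {M a : ℝ} (ha : |a| ≤ M) {z₁ z₂ : ℝ → ℝ} (hz₁ : SmR M a z₁)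
    (hz₂ : SmR M a z₂) (i j : Fin 4) {r : ℝ} (hr : rplus M a < r) :
    deriv (AvecR M a z₁ z₂ i j) r =
      (deriv z₁ r * z₂ r + z₁ r * deriv z₂ r) *
        ((1 / 2) * (Rtp M a z₁ i r * Lcoef j + Rtp M a z₁ j r * Lcoef i)) +
      z₁ r * z₂ r * ((1 / 2) * (deriv (Rtp M a z₁ i) r * Lcoef j +
        deriv (Rtp M a z₁ j) r * Lcoef i)) :=
  (((hz₁.hasDerivAt hr).mul (hz₂.hasDerivAt hr)).mul
    (((((SmR.Rtp ha hz₁ i).hasDerivAt hr).mul_const (Lcoef j)).add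
      (((SmR.Rtp ha hz₁ j).hasDerivAt hr).mul_const (Lcoef i))).const_mul (1 / 2))).deriv

/-- `∂_r (z₂ ℛ̃′^c)`. -/
def vR (M a : ℝ) (z₁ z₂ : ℝ → ℝ) (c : Fin 4) : ℝ → ℝ :=
  deriv fun v => z₂ v * Rtp M a z₁ c v

/-- The term with `∂_r z₁` in the definition of `q_A` cancels the derivative falling on `z₁`, which
leaves `q_A^{ab} = (1/2) z₁ ∂_r(z₂ ℛ̃′^{(a}) ℒ^{b)}`. -/
lemma qA_eq {M a : ℝ} (ha : |a| ≤ M) {z₁ z₂ : ℝ → ℝ} (hz₁ : SmR M a z₁)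
    (hz₂ : SmR M a z₂) (i j : Fin 4) : Set.EqOn (qA M a z₁ z₂ i j)
      (fun r => (1 / 4) * (z₁ r * vR M a z₁ z₂ i r * Lcoef j + z₁ r * vR M a z₁ z₂ j r * Lcoef i))
      (Set.Ioi (rplus M a)) := by
  intro r hr
  have h : ∀ c, vR M a z₁ z₂ c r = deriv z₂ r * Rtp M a z₁ c r + z₂ r * deriv (Rtp M a z₁ c) r :=
    fun c => ((hz₂.hasDerivAt hr).mul ((SmR.Rtp ha hz₁ c).hasDerivAt hr)).deriv
  simp only [qA, deriv_AvecR ha hz₁ hz₂ i j hr, h]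
  ring

/-- The zeroth-order coefficient: `∂_r(Δ ∂_r q_A^{ab}) = 2 𝒱^{(a} ℒ^{b)}`. -/
lemma Vcoef_sym {M a : ℝ} (ha : |a| ≤ M) {z₁ z₂ : ℝ → ℝ} (hz₁ : SmR M a z₁)
    (hz₂ : SmR M a z₂) (i j : Fin 4) {r : ℝ} (hr : rplus M a < r) :
    deriv (Δk M a) r * deriv (qA M a z₁ z₂ i j) r +
      Δk M a r * deriv (deriv (qA M a z₁ z₂ i j)) r =
    Vcoef M a z₁ z₂ i r * Lcoef j + Vcoef M a z₁ z₂ j r * Lcoef i := by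
  have hw : ∀ c, SmR M a fun s => z₁ s * vR M a z₁ z₂ c s := fun c =>
    hz₁.mul (SmR.deriv (hz₂.mul (SmR.Rtp ha hz₁ c)))
  set w : Fin 4 → ℝ → ℝ := fun c => deriv fun s => z₁ s * vR M a z₁ z₂ c s with hwdef
  have hw' : ∀ c, SmR M a (w c) := fun c => (hw c).deriv
  have hV : ∀ c, Vcoef M a z₁ z₂ c r =
      (1 / 4) * (deriv (Δk M a) r * w c r + Δk M a r * deriv (w c) r) := fun c => by
    rw [← (((SmR.Δk M a).hasDerivAt hr).mul ((hw' c).hasDerivAt hr)).deriv]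
    rfl
  have h1 : Set.EqOn (deriv (qA M a z₁ z₂ i j))
      (fun s => (1 / 4) * (w i s * Lcoef j + w j s * Lcoef i)) (Set.Ioi (rplus M a)) := by
    intro s hs
    have : qA M a z₁ z₂ i j =ᶠ[𝓝 s] _ :=
      Filter.eventuallyEq_of_mem (isOpen_Ioi.mem_nhds hs) (qA_eq ha hz₁ hz₂ i j)
    rw [this.deriv_eq]
    exact (((((hw i).hasDerivAt hs).mul_const (Lcoef j)).add
      (((hw j).hasDerivAt hs).mul_const (Lcoef i))).const_mul (1 / 4)).deriv
  have h2 : deriv (deriv (qA M a z₁ z₂ i j)) r =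
      (1 / 4) * (deriv (w i) r * Lcoef j + deriv (w j) r * Lcoef i) := by
    have : deriv (qA M a z₁ z₂ i j) =ᶠ[𝓝 r] _ :=
      Filter.eventuallyEq_of_mem (isOpen_Ioi.mem_nhds hr) h1
    rw [this.deriv_eq]
    exact (((((hw' i).hasDerivAt hr).mul_const (Lcoef j)).add
      (((hw' j).hasDerivAt hr).mul_const (Lcoef i))).const_mul (1 / 4)).deriv
  rw [hV i, hV j, h1 hr, h2]
  ring

/-- `𝒜^c` with the square roots eliminated. -/
lemma Acoef_eq {M a : ℝ} (ha : |a| ≤ M) {z₁ z₂ : ℝ → ℝ} (hz₁ : SmR M a z₁)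
    (hz₂ : SmR M a z₂) (hpos : ∀ r ∈ Set.Ioi (rplus M a), 0 < z₁ r) (c : Fin 4) {r : ℝ}
    (hr : rplus M a < r) :
    Acoef M a z₁ z₂ c r =
      (1 / 2) * z₂ r * (deriv (Δk M a) r * z₁ r - Δk M a r * deriv z₁ r) * Rtp M a z₁ c r -
        Δk M a r * z₁ r * (deriv z₂ r * Rtp M a z₁ c r + z₂ r * deriv (Rtp M a z₁ c) r) := by
  have hΔ := Δk_pos ha hr
  have hz := hpos r hr
  have hw := Real.sqrt_pos.2 hΔ
  have hs := Real.sqrt_pos.2 hz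
  have hw2 := Real.sq_sqrt hΔ.le
  have hs2 := Real.sq_sqrt hz.le
  have h := ((((hz₂.hasDerivAt hr).mul ((hz₁.hasDerivAt hr).sqrt hz.ne')).mul
    ((((SmR.Δk M a).hasDerivAt hr).sqrt hΔ.ne').inv hw.ne')).mul
    ((SmR.Rtp ha hz₁ c).hasDerivAt hr)).deriv
  have h' : Rtpp M a z₁ z₂ c r = _ := h
  simp only [Pi.mul_apply, Pi.inv_apply] at h'
  rw [Acoef, h']
  generalize Real.sqrt (z₁ r) = s at *
  generalize Real.sqrt (Δk M a r) = w at *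
  generalize Rtp M a z₁ c r = R at *
  rw [← hw2, ← hs2]
  field_simp
  ring

/-- The divergence of the `(i, j)` summand of the momentum is the claimed summand plus a remainder
that is antisymmetric in `(i, j)`. -/
lemma pair_target {M a : ℝ} (ha : |a| ≤ M) {z₁ z₂ : ℝ → ℝ} (hz₁ : SmR M a z₁)
    (hz₂ : SmR M a z₂) (hpos : ∀ r ∈ Set.Ioi (rplus M a), 0 < z₁ r) (i j : Fin 4)
    {f g : V4 → ℝ} (hf : IsWaveSol M a f) (hg : Sm M a g) {x : V4} (hx : x ∈ ext M a) :
    (Real.sin (x 2))⁻¹ *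
        ∑ α, pairD M a (AvecR M a z₁ z₂ i j) (qA M a z₁ z₂ i j) f g α x =
      ((1 / 2) * (Acoef M a z₁ z₂ i (x 1) * Lcoef j + Acoef M a z₁ z₂ j (x 1) * Lcoef i) *
          pd 1 f x * pd 1 g x +
        (∑ c, (1 / 2) *
          (Ucoef M a z₁ z₂ c i (x 1) * Lcoef j + Ucoef M a z₁ z₂ c j (x 1) * Lcoef i) *
          (∑ α, ∑ β, Smat a c (x 2) α β * pd α f x * pd β g x)) +
        (1 / 2) * (Vcoef M a z₁ z₂ i (x 1) * Lcoef j + Vcoef M a z₁ z₂ j (x 1) * Lcoef i) *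
          f x * g x) +
      pairW M a (AvecR M a z₁ z₂ i j) (qA M a z₁ z₂ i j) f g x := by
  have hr := hx.1
  have e0 : ∑ α, ∑ β, Smat a 0 (x 2) α β * pd α f x * pd β g x = pd 0 f x * pd 0 g x := by
    simp [Smat, Fin.sum_univ_four]
  have e1 : ∑ α, ∑ β, Smat a 1 (x 2) α β * pd α f x * pd β g x =
      (1 / 2) * (pd 0 f x * pd 3 g x + pd 3 f x * pd 0 g x) := by
    simp [Smat, Fin.sum_univ_four]; ring
  have e2 : ∑ α, ∑ β, Smat a 2 (x 2) α β * pd α f x * pd β g x = pd 3 f x * pd 3 g x := by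
    simp [Smat, Fin.sum_univ_four]
  have e3 : ∑ α, ∑ β, Smat a 3 (x 2) α β * pd α f x * pd β g x =
      a ^ 2 * Real.sin (x 2) ^ 2 * (pd 0 f x * pd 0 g x) + pd 2 f x * pd 2 g x +
        Real.cos (x 2) ^ 2 / Real.sin (x 2) ^ 2 * (pd 3 f x * pd 3 g x) := by
    simp [Smat, Fin.sum_univ_four]; ring
  have hq : (1 / 2) * deriv (AvecR M a z₁ z₂ i j) (x 1) - qA M a z₁ z₂ i j (x 1) =
      (1 / 2) * deriv z₁ (x 1) * z₂ (x 1) *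
      ((1 / 2) * (Rtp M a z₁ i (x 1) * Lcoef j + Rtp M a z₁ j (x 1) * Lcoef i)) := by
    rw [qA]; ring
  rw [pair_divergence ha hf hg hx, Vcoef_sym ha hz₁ hz₂ i j hr, Fin.sum_univ_four, e0, e1, e2, e3,
    Acoef_eq ha hz₁ hz₂ hpos i hr, Acoef_eq ha hz₁ hz₂ hpos j hr, hq]
  have hA : AvecR M a z₁ z₂ i j (x 1) = z₁ (x 1) * z₂ (x 1) *
    ((1 / 2) * (Rtp M a z₁ i (x 1) * Lcoef j + Rtp M a z₁ j (x 1) * Lcoef i)) := rfl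
  have hU : ∀ c d, Ucoef M a z₁ z₂ c d (x 1) =
      (1 / 2) * z₂ (x 1) * Rtp M a z₁ c (x 1) * Rtp M a z₁ d (x 1) := fun _ _ => rfl
  have q' : qA M a z₁ z₂ i j (x 1) = (1 / 2) * deriv (AvecR M a z₁ z₂ i j) (x 1) -
      (1 / 2) * deriv z₁ (x 1) * z₂ (x 1) *
      ((1 / 2) * (Rtp M a z₁ i (x 1) * Lcoef j + Rtp M a z₁ j (x 1) * Lcoef i)) := rfl
  rw [q', deriv_AvecR ha hz₁ hz₂ i j hr, hA]
  simp only [hU]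
  generalize hI : Rtp M a z₁ i (x 1) = Ri
  generalize hJ : Rtp M a z₁ j (x 1) = Rj
  rw [Rtp_three ha hz₁ hr, Rtp_eq ha hz₁ 0 hr, Rtp_eq ha hz₁ 1 hr, Rtp_eq ha hz₁ 2 hr]
  unfold G0 G03 G3
  ring

lemma pairW_sum (M a : ℝ) (z₁ z₂ : ℝ → ℝ) (F : Fin 4 → V4 → ℝ) (x : V4) :
    ∑ i, ∑ j, pairW M a (AvecR M a z₁ z₂ i j) (qA M a z₁ z₂ i j) (F i) (F j) x = 0 := by
  have hA : ∀ i j, AvecR M a z₁ z₂ i j = AvecR M a z₁ z₂ j i := fun i j => by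
    funext r; simp only [AvecR]; ring
  have hq : ∀ i j, qA M a z₁ z₂ i j = qA M a z₁ z₂ j i := fun i j => by
    funext r; simp only [qA, hA i j]; ring
  have h : ∑ i, ∑ j, pairW M a (AvecR M a z₁ z₂ i j) (qA M a z₁ z₂ i j) (F i) (F j) x =
      -∑ i, ∑ j, pairW M a (AvecR M a z₁ z₂ i j) (qA M a z₁ z₂ i j) (F i) (F j) x := by
    conv_lhs => rw [Finset.sum_comm]
    simp only [← Finset.sum_neg_distrib]
    refine Finset.sum_congr rfl fun i _ => Finset.sum_congr rfl fun j _ => ?_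
    rw [hA j i, hq j i, pairW_antisymm]
  linarith

/-- **Lemma 3.4 (Divergence of the symmetry-indexed Morawetz momentum).** -/
theorem morawetz_momentum_divergence (M a : ℝ) (hM : 0 < M) (ha : |a| ≤ M)
    (z₁ z₂ : ℝ → ℝ) (hz₁ : ContDiff ℝ (⊤ : ℕ∞) z₁) (hz₂ : ContDiff ℝ (⊤ : ℕ∞) z₂)
    (hz₁pos : ∀ r ∈ Set.Ioi (rplus M a), 0 < z₁ r) (hz₂pos : ∀ r ∈ Set.Ioi (rplus M a), 0 < z₂ r)
    (ψ : V4 → ℝ) (hψ : IsWaveSol M a ψ) :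
    ∀ x ∈ ext M a,
      (Real.sin (x 2))⁻¹ *
          (∑ α, pd α (fun y => Real.sin (y 2) * morMomentum M a z₁ z₂ ψ α y) x) =
        ∑ i, ∑ j,
          ((1 / 2) * (Acoef M a z₁ z₂ i (x 1) * Lcoef j + Acoef M a z₁ z₂ j (x 1) * Lcoef i) *
              pd 1 (symS a i ψ) x * pd 1 (symS a j ψ) x +
            (∑ c, (1 / 2) *
              (Ucoef M a z₁ z₂ c i (x 1) * Lcoef j + Ucoef M a z₁ z₂ c j (x 1) * Lcoef i) *
              (∑ α, ∑ β, Smat a c (x 2) α β * pd α (symS a i ψ) x * pd β (symS a j ψ) x)) +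
            (1 / 2) * (Vcoef M a z₁ z₂ i (x 1) * Lcoef j + Vcoef M a z₁ z₂ j (x 1) * Lcoef i) *
              symS a i ψ x * symS a j ψ x) := by
  intro x hx
  have h₁ : SmR M a z₁ := hz₁.contDiffOn
  have h₂ : SmR M a z₂ := hz₂.contDiffOn
  have hsol : ∀ i, IsWaveSol M a (symS a i ψ) := fun i => (isSym_symS M a i).solution ha hψ
  -- each summand is differentiated separately; `pairMom_hasDerivAt` supplies differentiability
  have hpd : ∀ α, pd α (fun y => Real.sin (y 2) * morMomentum M a z₁ z₂ ψ α y) x =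
      ∑ i, ∑ j, pairD M a (AvecR M a z₁ z₂ i j) (qA M a z₁ z₂ i j) (symS a i ψ) (symS a j ψ)
        α x := by
    intro α
    have e : (fun y => Real.sin (y 2) * morMomentum M a z₁ z₂ ψ α y) = fun y => ∑ i, ∑ j,
        Real.sin (y 2) * pairMom M a (AvecR M a z₁ z₂ i j) (qA M a z₁ z₂ i j)
          (symS a i ψ) (symS a j ψ) α y := by
      funext y
      simp only [← Finset.mul_sum]
      rfl
    rw [e]
    refine HasDerivAt.deriv (HasDerivAt.fun_sum fun i _ => HasDerivAt.fun_sum fun j _ => ?_)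
    exact pairMom_hasDerivAt ha (SmR.AvecR ha h₁ h₂ i j) (SmR.qA ha h₁ h₂ i j)
        (hsol i).1 (hsol j).1 α hx
  have hswap : (Real.sin (x 2))⁻¹ * ∑ α, ∑ i, ∑ j, pairD M a (AvecR M a z₁ z₂ i j)
        (qA M a z₁ z₂ i j) (symS a i ψ) (symS a j ψ) α x =
      ∑ i, ∑ j, (Real.sin (x 2))⁻¹ * ∑ α, pairD M a (AvecR M a z₁ z₂ i j)
        (qA M a z₁ z₂ i j) (symS a i ψ) (symS a j ψ) α x := by
    rw [Finset.sum_comm, Finset.mul_sum]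
    refine Finset.sum_congr rfl fun i _ => ?_
    rw [Finset.sum_comm, Finset.mul_sum]
  simp only [hpd]
  rw [hswap]
  rw [Finset.sum_congr rfl fun i _ => Finset.sum_congr rfl fun j _ =>
    pair_target ha h₁ h₂ hz₁pos i j (hsol i) (hsol j).1 hx]
  simp only [Finset.sum_add_distrib (g := fun j => pairW M a _ _ _ (symS a j ψ) x)]
  rw [Finset.sum_add_distrib, pairW_sum M a z₁ z₂ (fun i => symS a i ψ) x, add_zero]

end KerrPaper
end
end
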